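/- arXiv:2603.16696 — 7 statements merged into one kernel-verified Lean document; each statement's English description precedes it below -/
import Mathlib

section
/- With the elliptic data below, ∫_{η₁⁻¹}^{η₁} ds / √((η₁ − s)(s − η₁⁻¹)(η₂ − s)(s − η₂⁻¹)) = (√((1 − l₁²)(1 − l₂²)) / l₂) · K(k). -/
/-- Complete elliptic integral of the first kind:
`K(k) = ∫₀¹ ds/√((1−s²)(1−k²s²))`. -/
noncomputable def ellK (k : ℝ) : ℝ :=
  ∫ s in (0 : ℝ)..1, 1 / Real.sqrt ((1 - s ^ 2) * (1 - k ^ 2 * s ^ 2))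

/-- `l(x) = (x−1)/(x+1)`. -/
noncomputable def lpar (x : ℝ) : ℝ := (x - 1) / (x + 1)

open MeasureTheory in
lemma even_integral (g : ℝ → ℝ) (hg : ∀ x, g (-x) = g x) :
    ∫ t in (-1 : ℝ)..1, g t = 2 * ∫ t in (0 : ℝ)..1, g t := by
  have h := integral_comp_abs (f := (Set.Iic (1 : ℝ)).indicator g)
  have e1 : (fun x : ℝ => (Set.Iic (1 : ℝ)).indicator g |x|)
      = (Set.Icc (-1 : ℝ) 1).indicator g := by
    funext x
    have hx : g |x| = g x := by
      rcases abs_choice x with h | h <;> rw [h]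
      exact hg x
    simp only [Set.indicator, Set.mem_Iic, Set.mem_Icc, abs_le, hx]
  rw [e1, integral_indicator measurableSet_Icc, setIntegral_indicator measurableSet_Iic,
    integral_Icc_eq_integral_Ioc] at h
  rw [intervalIntegral.integral_of_le (by norm_num), intervalIntegral.integral_of_le (by norm_num),
    h, Set.Ioi_inter_Iic]

theorem stmt11 (η₁ η₂ : ℝ) (h1 : 1 < η₁) (h2 : η₁ < η₂) :
    (∫ s in η₁⁻¹..η₁,
        1 / Real.sqrt ((η₁ - s) * (s - η₁⁻¹) * (η₂ - s) * (s - η₂⁻¹))) =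
      Real.sqrt ((1 - lpar η₁ ^ 2) * (1 - lpar η₂ ^ 2)) / lpar η₂ *
        ellK (lpar η₁ / lpar η₂) := by
  obtain ⟨a, ha⟩ : ∃ a, a = lpar η₁ := ⟨_, rfl⟩
  obtain ⟨b, hb⟩ : ∃ b, b = lpar η₂ := ⟨_, rfl⟩
  rw [← ha, ← hb]
  unfold lpar at ha hb
  have a0 : 0 < a := by rw [ha]; apply div_pos <;> linarith
  have b0 : 0 < b := by rw [hb]; apply div_pos <;> linarith
  have a1 : a < 1 := by rw [ha, div_lt_one] <;> linarith
  have b1 : b < 1 := by rw [hb, div_lt_one] <;> linarith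
  have e1 : η₁ = (1 + a) / (1 - a) := by
    rw [eq_div_iff (by linarith)]
    rw [eq_div_iff (by linarith)] at ha
    linarith
  have e2 : η₂ = (1 + b) / (1 - b) := by
    rw [eq_div_iff (by linarith)]
    rw [eq_div_iff (by linarith)] at hb
    linarith
  clear ha hb
  subst e1 e2
  have hd : ∀ t : ℝ, t ∈ Set.Icc (-1 : ℝ) 1 → 0 < 1 - a * t := by
    rintro t ⟨_, h⟩
    nlinarith
  have sub := intervalIntegral.integral_comp_mul_deriv_of_deriv_nonneg (a := (-1 : ℝ)) (b := 1)
    (f := fun t => (1 + a * t) / (1 - a * t)) (f' := fun t => 2 * a / (1 - a * t) ^ 2)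
    (g := fun s => 1 / Real.sqrt (((1 + a) / (1 - a) - s) * (s - ((1 + a) / (1 - a))⁻¹) *
      ((1 + b) / (1 - b) - s) * (s - ((1 + b) / (1 - b))⁻¹)))
    (by
      rw [Set.uIcc_of_le (by norm_num)]
      exact ContinuousOn.div (by fun_prop) (by fun_prop) fun t ht => (hd t ht).ne')
    (by
      intro t ht
      have ht' := hd t (by constructor <;> simp at ht <;> linarith)
      have n : HasDerivAt (fun t : ℝ => 1 + a * t) a t := by
        simpa using ((hasDerivAt_id t).const_mul a).const_add 1
      have d : HasDerivAt (fun t : ℝ => 1 - a * t) (-a) t := by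
        simpa using ((hasDerivAt_id t).const_mul a).const_sub 1
      have q := n.fun_div d ht'.ne'
      have e : (a * (1 - a * t) - (1 + a * t) * (-a)) / (1 - a * t) ^ 2
          = 2 * a / (1 - a * t) ^ 2 := by ring
      rw [e] at q
      exact q)
    (by
      intro t ht
      positivity)
  have l : (1 + a * (-1)) / (1 - a * (-1)) = ((1 + a) / (1 - a))⁻¹ := by
    rw [inv_div]; ring
  simp only [l, mul_one] at sub
  rw [← sub, ellK]
  have key : ∀ t ∈ Set.uIcc (-1 : ℝ) 1,
      ((fun s => 1 / Real.sqrt (((1 + a) / (1 - a) - s) * (s - ((1 + a) / (1 - a))⁻¹) *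
      ((1 + b) / (1 - b) - s) * (s - ((1 + b) / (1 - b))⁻¹))) ∘
        (fun t => (1 + a * t) / (1 - a * t))) t * (2 * a / (1 - a * t) ^ 2) =
      (Real.sqrt ((1 - a ^ 2) * (1 - b ^ 2)) / (2 * b)) *
        (1 / Real.sqrt ((1 - t ^ 2) * (1 - (a / b) ^ 2 * t ^ 2))) := by
    intro t ht
    rw [Set.uIcc_of_le (by norm_num)] at ht
    have ht' := hd t ht
    have A : 0 < 1 - a := by linarith
    have B : 0 < 1 - b := by linarith
    have C : 0 < (1 - a ^ 2) * (1 - b ^ 2) := by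
      have : (1 - a ^ 2) * (1 - b ^ 2) = (1-a)*(1+a)*((1-b)*(1+b)) := by ring
      rw [this]; positivity
    have e : ((1 + a) / (1 - a) - (1 + a * t) / (1 - a * t)) *
        ((1 + a * t) / (1 - a * t) - ((1 + a) / (1 - a))⁻¹) *
        ((1 + b) / (1 - b) - (1 + a * t) / (1 - a * t)) *
        ((1 + a * t) / (1 - a * t) - ((1 + b) / (1 - b))⁻¹) =
        (4 * a * b / (1 - a * t) ^ 2) ^ 2 * ((1 - t ^ 2) * (1 - (a / b) ^ 2 * t ^ 2))
          / ((1 - a ^ 2) * (1 - b ^ 2)) := by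
      have : (1 - a ^ 2) * (1 - b ^ 2) = (1-a)*(1+a)*((1-b)*(1+b)) := by ring
      rw [this, inv_div, inv_div]
      have := A.ne'
      have := B.ne'
      have := ht'.ne'
      have : 1 + a ≠ 0 := by positivity
      have : 1 + b ≠ 0 := by positivity
      field_simp
      ring
    simp only [Function.comp]
    rw [e, Real.sqrt_div' _ C.le, Real.sqrt_mul (by positivity), Real.sqrt_sq (by positivity)]
    have S := (Real.sqrt_pos.2 C).ne'
    generalize Real.sqrt ((1 - a ^ 2) * (1 - b ^ 2)) = S at *
    generalize Real.sqrt ((1 - t ^ 2) * (1 - (a / b) ^ 2 * t ^ 2)) = T at *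
    rw [one_div_div]
    by_cases hT : T = 0
    · simp [hT]
    have := ht'.ne'
    field_simp
    try ring
  rw [intervalIntegral.integral_congr key, intervalIntegral.integral_const_mul,
    even_integral _ (by intro x; simp only [neg_sq])]
  field_simp
end

section
/- With the elliptic data below, ∫_{η₁⁻¹}^{η₁} (s + s⁻¹) ds / √((η₁ − s)(s − η₁⁻¹)(η₂ − s)(s − η₂⁻¹)) = (2√((1 − l₁²)(1 − l₂²)) / l₂) · (2Π(l₁², k) − K(k)). -/
/-- Complete elliptic integral of the third kind:
`Π(m,k) = ∫₀¹ ds/((1−ms²)√((1−s²)(1−k²s²)))`. -/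
noncomputable def ellPi (m k : ℝ) : ℝ :=
  ∫ s in (0 : ℝ)..1, 1 / ((1 - m * s ^ 2) * Real.sqrt ((1 - s ^ 2) * (1 - k ^ 2 * s ^ 2)))

lemma s12_intK (k : ℝ) (hk0 : 0 < k) (hk : k < 1) :
    IntervalIntegrable (fun s : ℝ => 1 / Real.sqrt ((1 - s ^ 2) * (1 - k ^ 2 * s ^ 2)))
      MeasureTheory.volume 0 1 := by
  have h0 : IntervalIntegrable (fun x : ℝ => x ^ (-(1/2) : ℝ)) MeasureTheory.volume 1 0 :=
    intervalIntegral.intervalIntegrable_rpow' (by norm_num)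
  have h1 := h0.comp_sub_left 1
  norm_num at h1
  have h2 := h1.const_mul (1 / Real.sqrt (1 - k ^ 2))
  refine h2.mono_fun' (Measurable.aestronglyMeasurable (by fun_prop)) ?_
  refine (MeasureTheory.ae_restrict_iff' measurableSet_uIoc).2 (Filter.Eventually.of_forall ?_)
  intro x hx
  rw [Set.uIoc_of_le zero_le_one] at hx
  obtain ⟨hx0, hx1⟩ := hx
  have hk2 : 0 < 1 - k ^ 2 := by nlinarith
  rcases eq_or_lt_of_le hx1 with h | h
  · subst h
    norm_num
  · have hp : (1 - x) ^ (-(1/2) : ℝ) = 1 / Real.sqrt (1 - x) := by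
      rw [Real.rpow_neg (by linarith), ← Real.sqrt_eq_rpow, one_div]
    have hle : (1 - k ^ 2) * (1 - x) ≤ (1 - x ^ 2) * (1 - k ^ 2 * x ^ 2) := by
      have e1 : 1 - x ≤ 1 - x ^ 2 := by nlinarith
      have e2 : 1 - k ^ 2 ≤ 1 - k ^ 2 * x ^ 2 := by
        have : x ^ 2 ≤ 1 := by nlinarith
        nlinarith [sq_nonneg k]
      rw [mul_comm (1 - x ^ 2)]
      exact mul_le_mul e2 e1 (by linarith) (by linarith)
    have hpos : 0 < (1 - k ^ 2) * (1 - x) := mul_pos hk2 (by linarith)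
    have hm : Real.sqrt (1 - k ^ 2) * Real.sqrt (1 - x) ≤
        Real.sqrt ((1 - x ^ 2) * (1 - k ^ 2 * x ^ 2)) := by
      rw [← Real.sqrt_mul hk2.le]
      exact Real.sqrt_le_sqrt hle
    have hq : 0 < Real.sqrt (1 - k ^ 2) * Real.sqrt (1 - x) :=
      mul_pos (Real.sqrt_pos.2 hk2) (Real.sqrt_pos.2 (by linarith))
    have hfin := one_div_le_one_div_of_le hq hm
    beta_reduce
    rw [Real.norm_of_nonneg (by positivity)]
    have hp' : (1 - x) ^ (-1/2 : ℝ) = 1 / Real.sqrt (1 - x) := by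
      rw [← hp]; norm_num
    norm_num at hp hp' hfin ⊢
    first
      | (rw [hp]; linarith)
      | (rw [hp']; linarith)

lemma s12_intPi (a k : ℝ) (ha0 : 0 < a) (ha : a < 1) (hk0 : 0 < k) (hk : k < 1) :
    IntervalIntegrable (fun s : ℝ => 1 / ((1 - a ^ 2 * s ^ 2) *
      Real.sqrt ((1 - s ^ 2) * (1 - k ^ 2 * s ^ 2)))) MeasureTheory.volume 0 1 := by
  have h := (s12_intK k hk0 hk).continuousOn_mul (g := fun s => 1 / (1 - a ^ 2 * s ^ 2)) (by
    apply ContinuousOn.div (by fun_prop) (by fun_prop)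
    intro x hx
    rw [Set.uIcc_of_le zero_le_one] at hx
    have : x ^ 2 ≤ 1 := by nlinarith [hx.1, hx.2]
    have : a ^ 2 < 1 := by nlinarith
    nlinarith [sq_nonneg a])
  refine h.congr (fun x _ => ?_)
  simp only [one_div, mul_inv]

lemma s12_pt (a b t C : ℝ) (ha0 : 0 < a) (hab : a < b) (hb : b < 1) (ht : t ∈ Set.Ioo (-1 : ℝ) 1)
    (hC : 0 < C) (hC2 : C ^ 2 = (1 - a ^ 2) * (1 - b ^ 2)) :
    |2 * a / (1 - a * t) ^ 2| •
      (((1 + a * t) / (1 - a * t) + ((1 + a * t) / (1 - a * t))⁻¹) /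
        Real.sqrt (((1 + a) / (1 - a) - (1 + a * t) / (1 - a * t)) *
          ((1 + a * t) / (1 - a * t) - ((1 + a) / (1 - a))⁻¹) *
          ((1 + b) / (1 - b) - (1 + a * t) / (1 - a * t)) *
          ((1 + a * t) / (1 - a * t) - ((1 + b) / (1 - b))⁻¹))) =
    C / b * (2 * (1 / ((1 - a ^ 2 * t ^ 2) *
      Real.sqrt ((1 - t ^ 2) * (1 - (a / b) ^ 2 * t ^ 2)))) -
      1 / Real.sqrt ((1 - t ^ 2) * (1 - (a / b) ^ 2 * t ^ 2))) := by
  obtain ⟨ht1, ht2⟩ := ht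
  have hb0 : 0 < b := ha0.trans hab
  have p1 : 0 < 1 - a * t := by nlinarith
  have p2 : 0 < 1 + a * t := by nlinarith
  have p3 : 0 < 1 - a := by linarith
  have p4 : 0 < 1 - b := by linarith
  have hrad : ((1 + a) / (1 - a) - (1 + a * t) / (1 - a * t)) *
          ((1 + a * t) / (1 - a * t) - ((1 + a) / (1 - a))⁻¹) *
          ((1 + b) / (1 - b) - (1 + a * t) / (1 - a * t)) *
          ((1 + a * t) / (1 - a * t) - ((1 + b) / (1 - b))⁻¹) =
      (4 * a * b / ((1 - a * t) ^ 2 * C)) ^ 2 *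
        ((1 - t ^ 2) * (1 - (a / b) ^ 2 * t ^ 2)) := by
    have e : (4 * a * b / ((1 - a * t) ^ 2 * C)) ^ 2 =
      16 * a ^ 2 * b ^ 2 / ((1 - a * t) ^ 4 * ((1 - a ^ 2) * (1 - b ^ 2))) := by
      rw [← hC2]; field_simp; ring
    have q1 : 0 < 1 - a ^ 2 := by nlinarith
    have q2 : 0 < 1 - b ^ 2 := by nlinarith
    have r1 : (1 - a ^ 2) = (1 - a) * (1 + a) := by ring
    have r2 : (1 - b ^ 2) = (1 - b) * (1 + b) := by ring
    rw [e, inv_div, inv_div, r1, r2]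
    field_simp
    ring
  rw [hrad, Real.sqrt_mul (sq_nonneg _), Real.sqrt_sq (by positivity),
    abs_of_pos (by positivity), smul_eq_mul, inv_div]
  have hw : 0 < Real.sqrt ((1 - t ^ 2) * (1 - (a / b) ^ 2 * t ^ 2)) := by
    apply Real.sqrt_pos.2
    have hk : a / b < 1 := (div_lt_one hb0).2 hab
    have hk0 : 0 < a / b := by positivity
    have : t ^ 2 < 1 := by nlinarith
    have : (a / b) ^ 2 < 1 := by nlinarith
    apply mul_pos (by linarith)
    nlinarith [sq_nonneg t]
  generalize Real.sqrt ((1 - t ^ 2) * (1 - (a / b) ^ 2 * t ^ 2)) = w at hw ⊢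
  have r3 : 1 - a ^ 2 * t ^ 2 = (1 - a * t) * (1 + a * t) := by ring
  rw [r3]
  field_simp
  ring

lemma s12_image (a : ℝ) (ha0 : 0 < a) (ha : a < 1) :
    (fun t : ℝ => (1 + a * t) / (1 - a * t)) '' Set.Ioo (-1) 1 =
      Set.Ioo ((1 + a) / (1 - a))⁻¹ ((1 + a) / (1 - a)) := by
  have p3 : 0 < 1 - a := by linarith
  ext s
  constructor
  · rintro ⟨t, ⟨ht1, ht2⟩, rfl⟩
    have p1 : 0 < 1 - a * t := by nlinarith
    rw [inv_div]
    constructor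
    · simp only
      rw [div_lt_div_iff₀ (by linarith) p1]
      nlinarith
    · simp only
      rw [div_lt_div_iff₀ p1 (by linarith)]
      nlinarith
  · rintro ⟨hs1, hs2⟩
    have hs0 : 0 < s := lt_trans (by positivity) hs1
    rw [inv_div, div_lt_iff₀ (by linarith)] at hs1
    rw [lt_div_iff₀ p3] at hs2
    refine ⟨(s - 1) / (a * (s + 1)), ⟨?_, ?_⟩, ?_⟩
    · rw [lt_div_iff₀ (by positivity)]; nlinarith
    · rw [div_lt_iff₀ (by positivity)]; nlinarith
    · have e : a * ((s - 1) / (a * (s + 1))) = (s - 1) / (s + 1) := by field_simp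
      simp only [e]
      have : 1 - (s - 1) / (s + 1) ≠ 0 := by
        have : 1 - (s - 1) / (s + 1) = 2 / (s + 1) := by field_simp; ring
        rw [this]; positivity
      rw [div_eq_iff this]
      field_simp
      ring

lemma s12_even (F : ℝ → ℝ) (hF : ∀ x, F (-x) = F x)
    (hi : IntervalIntegrable F MeasureTheory.volume 0 1) :
    ∫ x in (-1 : ℝ)..1, F x = 2 * ∫ x in (0 : ℝ)..1, F x := by
  have hi' : IntervalIntegrable F MeasureTheory.volume (-1) 0 := by
    have := (IntervalIntegrable.iff_comp_neg (f := F) (a := 0) (b := 1)).1 hi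
    simp only [hF, neg_zero] at this
    exact this.symm
  rw [← intervalIntegral.integral_add_adjacent_intervals hi' hi]
  have := intervalIntegral.integral_comp_neg (a := 0) (b := 1) F
  simp only [hF, neg_zero] at this
  rw [← this]; ring

lemma s12_main (a b : ℝ) (ha0 : 0 < a) (hab : a < b) (hb : b < 1) :
    (∫ s in ((1 + a) / (1 - a))⁻¹..((1 + a) / (1 - a)),
        (s + s⁻¹) / Real.sqrt (((1 + a) / (1 - a) - s) * (s - ((1 + a) / (1 - a))⁻¹) *
          ((1 + b) / (1 - b) - s) * (s - ((1 + b) / (1 - b))⁻¹))) =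
      2 * Real.sqrt ((1 - a ^ 2) * (1 - b ^ 2)) / b *
        (2 * ellPi (a ^ 2) (a / b) - ellK (a / b)) := by
  have ha : a < 1 := hab.trans hb
  have hb0 : 0 < b := ha0.trans hab
  have p3 : 0 < 1 - a := by linarith
  have hk0 : 0 < a / b := by positivity
  have hk : a / b < 1 := (div_lt_one hb0).2 hab
  have q : 0 < (1 - a ^ 2) * (1 - b ^ 2) := mul_pos (by nlinarith) (by nlinarith)
  have hle : ((1 + a) / (1 - a))⁻¹ ≤ (1 + a) / (1 - a) := by
    rw [inv_div, div_le_div_iff₀ (by linarith) p3]; nlinarith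
  have hden : ∀ t ∈ Set.Ioo (-1 : ℝ) 1, 0 < 1 - a * t := by
    rintro t ⟨h1, h2⟩; nlinarith
  rw [intervalIntegral.integral_of_le hle, MeasureTheory.integral_Ioc_eq_integral_Ioo,
    ← s12_image a ha0 ha,
    MeasureTheory.integral_image_eq_integral_abs_deriv_smul
      (f' := fun t => 2 * a / (1 - a * t) ^ 2) measurableSet_Ioo]
  · rw [MeasureTheory.setIntegral_congr_fun measurableSet_Ioo
      (fun t ht => s12_pt a b t _ ha0 hab hb ht (Real.sqrt_pos.2 q) (Real.sq_sqrt q.le)),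
      ← MeasureTheory.integral_Ioc_eq_integral_Ioo,
      ← intervalIntegral.integral_of_le (by norm_num)]
    have iP := (s12_intPi a (a / b) ha0 ha hk0 hk).const_mul 2
    have iK := s12_intK (a / b) hk0 hk
    rw [intervalIntegral.integral_const_mul, s12_even _ (fun x => by simp only [neg_sq])
      (iP.sub iK), intervalIntegral.integral_sub iP iK, intervalIntegral.integral_const_mul]
    unfold ellPi ellK
    ring
  · intro t ht
    have h := hden t ht
    apply HasDerivAt.hasDerivWithinAt
    have n1 : HasDerivAt (fun t : ℝ => 1 + a * t) a t := by
      simpa using ((hasDerivAt_id t).const_mul a).const_add 1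
    have n2 : HasDerivAt (fun t : ℝ => 1 - a * t) (-a) t := by
      simpa using ((hasDerivAt_id t).const_mul a).const_sub 1
    have n3 := n1.div n2 h.ne'
    have e : (a * (1 - a * t) - (1 + a * t) * -a) / (1 - a * t) ^ 2 = 2 * a / (1 - a * t) ^ 2 := by
      ring
    rw [e] at n3
    exact n3
  · intro t ht u hu htu
    have h := hden t ht
    have h' := hden u hu
    simp only at htu
    rw [div_eq_div_iff h.ne' h'.ne'] at htu
    have : a * (t - u) = 0 := by linarith
    rcases mul_eq_zero.1 this with h | h <;> linarith

theorem stmt12 (η₁ η₂ : ℝ) (h1 : 1 < η₁) (h2 : η₁ < η₂) :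
    (∫ s in η₁⁻¹..η₁,
        (s + s⁻¹) / Real.sqrt ((η₁ - s) * (s - η₁⁻¹) * (η₂ - s) * (s - η₂⁻¹))) =
      2 * Real.sqrt ((1 - lpar η₁ ^ 2) * (1 - lpar η₂ ^ 2)) / lpar η₂ *
        (2 * ellPi (lpar η₁ ^ 2) (lpar η₁ / lpar η₂) - ellK (lpar η₁ / lpar η₂)) := by
  have key : ∀ η : ℝ, 1 < η → (1 + lpar η) / (1 - lpar η) = η := by
    intro η h
    have e1 : 1 + lpar η = 2 * η / (η + 1) := by unfold lpar; field_simp; ring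
    have e2 : 1 - lpar η = 2 / (η + 1) := by unfold lpar; field_simp; ring
    rw [e1, e2]; field_simp
  have h := s12_main (lpar η₁) (lpar η₂)
    (by unfold lpar; apply div_pos <;> linarith)
    (by unfold lpar; rw [div_lt_div_iff₀ (by linarith) (by linarith)]; nlinarith)
    (by unfold lpar; rw [div_lt_one (by linarith)]; linarith)
  rw [key η₁ h1, key η₂ (h1.trans h2)] at h
  exact h
end

section
/- With the elliptic data below, put κ₁ := 2·(2Π(l₁², k)/K(k) − 1). Then ∫_{η₁⁻¹}^{η₁} (s + s⁻¹ − κ₁) ds / √((η₁ − s)(s − η₁⁻¹)(η₂ − s)(s − η₂⁻¹)) = 0. -/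
theorem aux_int (k : ℝ) (hk0 : 0 < k) (hk1 : k < 1) :
    IntervalIntegrable (fun s : ℝ => 1 / Real.sqrt ((1 - s ^ 2) * (1 - k ^ 2 * s ^ 2)))
      MeasureTheory.volume 0 1 := by
  have h0 : IntervalIntegrable (fun x : ℝ => x ^ (-(1/2) : ℝ)) MeasureTheory.volume 0 1 :=
    intervalIntegral.intervalIntegrable_rpow' (by norm_num)
  have h1 := (h0.comp_sub_left 1).symm
  norm_num at h1
  have h2 : ContinuousOn (fun s : ℝ => 1 / Real.sqrt ((1 + s) * (1 - k ^ 2 * s ^ 2)))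
      (Set.uIcc 0 1) := by
    apply ContinuousOn.div continuousOn_const
    · fun_prop
    · intro s hs
      rw [Set.uIcc_of_le zero_le_one] at hs
      obtain ⟨ha, hb⟩ := hs
      have : 0 < 1 - k ^ 2 * s ^ 2 := by
        have : k * s < 1 := by nlinarith
        have : 0 ≤ k * s := by positivity
        nlinarith
      exact (Real.sqrt_pos.mpr (by positivity)).ne'
  have h3 := h1.mul_continuousOn h2
  refine h3.congr_ae ?_
  filter_upwards [MeasureTheory.ae_restrict_mem measurableSet_uIoc] with s hs
  rw [Set.uIoc_of_le zero_le_one] at hs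
  have e : (1 - s ^ 2) * (1 - k ^ 2 * s ^ 2) = (1 - s) * ((1 + s) * (1 - k ^ 2 * s ^ 2)) := by ring
  have hs1 : 0 ≤ 1 - s := by linarith [hs.2]
  rw [e, Real.sqrt_mul hs1, Real.rpow_neg hs1, Real.sqrt_eq_rpow (1 - s)]
  field_simp

theorem aux_main (l m κ : ℝ) (hl : 0 < l) (hlm : l < m) (hm : m < 1) :
    (∫ s in ((1 + l) / (1 - l))⁻¹..((1 + l) / (1 - l)), (s + s⁻¹ - κ) /
      Real.sqrt (((1 + l) / (1 - l) - s) * (s - ((1 + l) / (1 - l))⁻¹) *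
        ((1 + m) / (1 - m) - s) * (s - ((1 + m) / (1 - m))⁻¹))) =
    Real.sqrt ((1 - l ^ 2) * (1 - m ^ 2)) / (2 * m) * ∫ u in (-1 : ℝ)..1,
      (2 * (2 * (1 / (1 - l ^ 2 * u ^ 2)) - 1) - κ) *
        (1 / Real.sqrt ((1 - u ^ 2) * (1 - (l / m) ^ 2 * u ^ 2))) := by
  have hl1 : 0 < 1 - l := by linarith
  have hm1 : 0 < 1 - m := by linarith
  have hm0 : 0 < m := by linarith
  have hle : ((1 + l) / (1 - l))⁻¹ ≤ (1 + l) / (1 - l) := by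
    rw [inv_div, div_le_div_iff₀ (by linarith) hl1]; nlinarith
  have hpos : ∀ u ∈ Set.Ioo (-1 : ℝ) 1, 0 < 1 - l * u ∧ 0 < 1 + l * u := by
    rintro u ⟨ha, hb⟩
    constructor <;> nlinarith
  have himg : (fun u : ℝ => (1 + l * u) / (1 - l * u)) '' Set.Ioo (-1) 1 =
      Set.Ioo ((1 + l) / (1 - l))⁻¹ ((1 + l) / (1 - l)) := by
    rw [inv_div]
    ext s
    constructor
    · rintro ⟨u, hu, rfl⟩
      obtain ⟨p, q⟩ := hpos u hu
      obtain ⟨ha, hb⟩ := hu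
      constructor
      · simp only
        rw [div_lt_div_iff₀ (by linarith) p]; nlinarith
      · simp only
        rw [div_lt_div_iff₀ p hl1]; nlinarith
    · rintro ⟨ha, hb⟩
      rw [div_lt_iff₀ (by linarith)] at ha
      rw [lt_div_iff₀ hl1] at hb
      have hs : 0 < s + 1 := by nlinarith
      refine ⟨(s - 1) / (l * (s + 1)), ⟨?_, ?_⟩, ?_⟩
      · rw [lt_div_iff₀ (by positivity)]; nlinarith
      · rw [div_lt_iff₀ (by positivity)]; nlinarith
      · have e : l * ((s - 1) / (l * (s + 1))) = (s - 1) / (s + 1) := by field_simp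
        simp only [e]
        have e1 : 1 + (s - 1) / (s + 1) = 2 * s / (s + 1) := by field_simp; ring
        have e2 : 1 - (s - 1) / (s + 1) = 2 / (s + 1) := by field_simp; ring
        rw [e1, e2]; field_simp
  have hinj : Set.InjOn (fun u : ℝ => (1 + l * u) / (1 - l * u)) (Set.Ioo (-1) 1) := by
    intro u hu v hv h
    have p := (hpos u hu).1
    have q := (hpos v hv).1
    simp only at h
    rw [div_eq_div_iff p.ne' q.ne'] at h
    have : l * (u - v) = 0 := by linarith
    rcases mul_eq_zero.mp this with h | h <;> linarith
  have hder : ∀ u ∈ Set.Ioo (-1 : ℝ) 1, HasDerivWithinAt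
      (fun u : ℝ => (1 + l * u) / (1 - l * u)) (2 * l / (1 - l * u) ^ 2) (Set.Ioo (-1) 1) u := by
    intro u hu
    have p := (hpos u hu).1
    have a : HasDerivAt (fun u : ℝ => 1 + l * u) l u := by
      simpa using ((hasDerivAt_id u).const_mul l).const_add 1
    have b : HasDerivAt (fun u : ℝ => 1 - l * u) (-l) u := by
      simpa using ((hasDerivAt_id u).const_mul l).const_sub 1
    have c := (a.div b p.ne').hasDerivWithinAt (s := Set.Ioo (-1) 1)
    have e : 2 * l / (1 - l * u) ^ 2 =
        (l * (1 - l * u) - (1 + l * u) * (-l)) / (1 - l * u) ^ 2 := by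
      congr 1; ring
    rw [e]
    exact c
  rw [intervalIntegral.integral_of_le hle, MeasureTheory.integral_Ioc_eq_integral_Ioo, ← himg,
    MeasureTheory.integral_image_eq_integral_abs_deriv_smul measurableSet_Ioo hder hinj,
    intervalIntegral.integral_of_le (by norm_num : (-1 : ℝ) ≤ 1),
    MeasureTheory.integral_Ioc_eq_integral_Ioo, ← MeasureTheory.integral_const_mul]
  refine MeasureTheory.setIntegral_congr_fun measurableSet_Ioo ?_
  intro u hu
  obtain ⟨p, q⟩ := hpos u hu
  obtain ⟨ha, hb⟩ := hu
  have hL : 0 < 1 - l ^ 2 := by nlinarith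
  have hM : 0 < 1 - m ^ 2 := by nlinarith
  set D := Real.sqrt ((1 - l ^ 2) * (1 - m ^ 2)) with hD
  have hDpos : 0 < D := Real.sqrt_pos.mpr (by positivity)
  have hD2 : D ^ 2 = (1 - l ^ 2) * (1 - m ^ 2) := Real.sq_sqrt (by positivity)
  have hP : 0 < (1 - u ^ 2) * (1 - (l / m) ^ 2 * u ^ 2) := by
    have hu2 : 0 < 1 - u ^ 2 := by nlinarith
    have : (l / m) ^ 2 < 1 := by
      have h1 : l / m < 1 := (div_lt_one hm0).mpr hlm
      have h0 : 0 < l / m := by positivity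
      nlinarith
    have : 0 < 1 - (l / m) ^ 2 * u ^ 2 := by nlinarith [sq_nonneg u, sq_nonneg (l / m)]
    positivity
  have hQ : ((1 + l) / (1 - l) - (1 + l * u) / (1 - l * u)) *
      ((1 + l * u) / (1 - l * u) - ((1 + l) / (1 - l))⁻¹) *
        ((1 + m) / (1 - m) - (1 + l * u) / (1 - l * u)) *
        ((1 + l * u) / (1 - l * u) - ((1 + m) / (1 - m))⁻¹) =
      (4 * l * m / (D * (1 - l * u) ^ 2)) ^ 2 * ((1 - u ^ 2) * (1 - (l / m) ^ 2 * u ^ 2)) := by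
    have hl2 : 0 < 1 + l := by linarith
    have hm2 : 0 < 1 + m := by linarith
    have e1 : (1 + l) / (1 - l) - (1 + l * u) / (1 - l * u) =
      2 * l * (1 - u) / ((1 - l) * (1 - l * u)) := by field_simp; ring
    have e2 : (1 + l * u) / (1 - l * u) - ((1 + l) / (1 - l))⁻¹ =
      2 * l * (1 + u) / ((1 + l) * (1 - l * u)) := by rw [inv_div]; field_simp; ring
    have e3 : (1 + m) / (1 - m) - (1 + l * u) / (1 - l * u) =
      2 * (m - l * u) / ((1 - m) * (1 - l * u)) := by field_simp; ring
    have e4 : (1 + l * u) / (1 - l * u) - ((1 + m) / (1 - m))⁻¹ =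
      2 * (m + l * u) / ((1 + m) * (1 - l * u)) := by rw [inv_div]; field_simp; ring
    have e5 : 1 - (l / m) ^ 2 * u ^ 2 = (m - l * u) * (m + l * u) / m ^ 2 := by field_simp; ring
    have e6 : (4 * l * m / (D * (1 - l * u) ^ 2)) ^ 2 =
      16 * l ^ 2 * m ^ 2 / (((1 - l) * (1 + l) * ((1 - m) * (1 + m))) * (1 - l * u) ^ 4) := by
      rw [div_pow, mul_pow D, hD2]; congr 1 <;> ring
    rw [e1, e2, e3, e4, e5, e6]
    field_simp
    ring
  have hS : 0 < Real.sqrt ((1 - u ^ 2) * (1 - (l / m) ^ 2 * u ^ 2)) := Real.sqrt_pos.mpr hP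
  simp only [smul_eq_mul]
  rw [hQ, Real.sqrt_mul (by positivity), Real.sqrt_sq (by positivity), abs_of_nonneg (by positivity)]
  have e : (1 + l * u) / (1 - l * u) + ((1 + l * u) / (1 - l * u))⁻¹ =
      2 * (2 * (1 / (1 - l ^ 2 * u ^ 2)) - 1) := by
    have : 1 - l ^ 2 * u ^ 2 = (1 - l * u) * (1 + l * u) := by ring
    rw [this, inv_div]
    field_simp
    ring
  rw [e]
  generalize 2 * (2 * (1 / (1 - l ^ 2 * u ^ 2)) - 1) - κ = N
  field_simp
  ring

theorem aux_even (f : ℝ → ℝ) (he : ∀ x, f (-x) = f x)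
    (hf : IntervalIntegrable f MeasureTheory.volume 0 1) :
    ∫ u in (-1 : ℝ)..1, f u = 2 * ∫ u in (0 : ℝ)..1, f u := by
  have hf' : IntervalIntegrable f MeasureTheory.volume (-1) 0 := by
    have := (hf.comp_sub_left 0).symm
    simpa [he] using this
  rw [← intervalIntegral.integral_add_adjacent_intervals hf' hf]
  have : ∫ u in (-1 : ℝ)..0, f u = ∫ u in (0 : ℝ)..1, f u := by
    have := intervalIntegral.integral_comp_neg (a := 0) (b := 1) f
    simp only [he, neg_zero] at this
    exact this.symm
  rw [this]; ring

theorem stmt13 (η₁ η₂ : ℝ) (h1 : 1 < η₁) (h2 : η₁ < η₂) :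
    (∫ s in η₁⁻¹..η₁,
        (s + s⁻¹ -
            2 * (2 * ellPi (lpar η₁ ^ 2) (lpar η₁ / lpar η₂) /
              ellK (lpar η₁ / lpar η₂) - 1)) /
          Real.sqrt ((η₁ - s) * (s - η₁⁻¹) * (η₂ - s) * (s - η₂⁻¹))) = 0 := by
  have hl : 0 < lpar η₁ := div_pos (by linarith) (by linarith)
  have hlm : lpar η₁ < lpar η₂ := by
    unfold lpar; rw [div_lt_div_iff₀ (by linarith) (by linarith)]; nlinarith
  have hm : lpar η₂ < 1 := by
    unfold lpar; rw [div_lt_one (by linarith)]; linarith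
  have inv : ∀ x : ℝ, 1 < x → x = (1 + lpar x) / (1 - lpar x) := by
    intro x hx
    have a : 1 + lpar x = 2 * x / (x + 1) := by unfold lpar; field_simp; ring
    have b : 1 - lpar x = 2 / (x + 1) := by unfold lpar; field_simp; ring
    rw [a, b]; field_simp
  have i1 := inv η₁ h1
  have i2 := inv η₂ (h1.trans h2)
  generalize lpar η₁ = l at *
  generalize lpar η₂ = m at *
  subst i1 i2
  have hm0 : 0 < m := hl.trans hlm
  have hk0 : 0 < l / m := by positivity
  have hk1 : l / m < 1 := (div_lt_one hm0).mpr hlm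
  rw [aux_main l m _ hl hlm hm]
  have hK := aux_int (l / m) hk0 hk1
  have hc : ContinuousOn (fun u : ℝ => 1 / (1 - l ^ 2 * u ^ 2)) (Set.uIcc 0 1) := by
    apply ContinuousOn.div continuousOn_const
    · fun_prop
    · intro s hs
      rw [Set.uIcc_of_le zero_le_one] at hs
      obtain ⟨ha, hb⟩ := hs
      have : l * s < 1 := by nlinarith
      have : 0 ≤ l * s := by positivity
      have : 0 < 1 - l ^ 2 * s ^ 2 := by nlinarith
      exact this.ne'
  have hPi := hK.continuousOn_mul hc
  have hKpos : 0 < ellK (l / m) := by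
    unfold ellK
    refine intervalIntegral.intervalIntegral_pos_of_pos_on hK ?_ zero_lt_one
    rintro s ⟨ha, hb⟩
    have a : 0 < 1 - s ^ 2 := by nlinarith
    have b : (l / m) * s < 1 := by nlinarith
    have c : 0 < (l / m) * s := by positivity
    have d : 0 < 1 - (l / m) ^ 2 * s ^ 2 := by nlinarith
    exact div_pos one_pos (Real.sqrt_pos.mpr (by positivity))
  have ePi : ellPi (l ^ 2) (l / m) = ∫ u in (0 : ℝ)..1, (1 / (1 - l ^ 2 * u ^ 2)) *
      (1 / Real.sqrt ((1 - u ^ 2) * (1 - (l / m) ^ 2 * u ^ 2))) := by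
    unfold ellPi
    congr 1; ext u; rw [div_mul_div_comm, one_mul]
  generalize hκ : 2 * (2 * ellPi (l ^ 2) (l / m) / ellK (l / m) - 1) = κ
  have eq : (fun u : ℝ => (2 * (2 * (1 / (1 - l ^ 2 * u ^ 2)) - 1) - κ) *
        (1 / Real.sqrt ((1 - u ^ 2) * (1 - (l / m) ^ 2 * u ^ 2)))) = fun u =>
      4 * ((1 / (1 - l ^ 2 * u ^ 2)) *
        (1 / Real.sqrt ((1 - u ^ 2) * (1 - (l / m) ^ 2 * u ^ 2)))) -
      (2 + κ) * (1 / Real.sqrt ((1 - u ^ 2) * (1 - (l / m) ^ 2 * u ^ 2))) := by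
    ext u; ring
  rw [eq, aux_even _ (by intro x; simp only [neg_sq]) ((hPi.const_mul 4).sub (hK.const_mul (2 + κ))),
    intervalIntegral.integral_sub (hPi.const_mul 4) (hK.const_mul (2 + κ)),
    intervalIntegral.integral_const_mul, intervalIntegral.integral_const_mul, ← ePi]
  change _ * (2 * (4 * ellPi (l ^ 2) (l / m) - (2 + κ) * ellK (l / m))) = 0
  rw [← hκ]
  field_simp
  ring
end

section
/- With the elliptic data below, ∫_{η₁}^{η₂} ds / √((s − η₁)(η₂ − s)(s − η₁⁻¹)(s − η₂⁻¹)) = (√((1 − l₁²)(1 − l₂²)) / (2 l₂)) · K(√(1 − k²)). -/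
open MeasureTheory Set in
lemma auxB (a b κ : ℝ) (ha : 0 < a) (hab : a < b) (hκ : 0 < κ) (hκ2 : κ ^ 2 = 1 - (a / b) ^ 2) :
    (∫ u in Ioo a b, 1 / Real.sqrt ((u ^ 2 - a ^ 2) * (b ^ 2 - u ^ 2))) =
      (1 / b) * ∫ t in Ioo (0 : ℝ) 1, 1 / Real.sqrt ((1 - t ^ 2) * (1 - κ ^ 2 * t ^ 2)) := by
  have hb : 0 < b := ha.trans hab
  have hκb : b ^ 2 * κ ^ 2 = b ^ 2 - a ^ 2 := by
    rw [hκ2]; field_simp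
  have hκ1 : κ ^ 2 < 1 := by
    rw [hκ2]; have : 0 < (a / b) ^ 2 := by positivity
    linarith
  have hpos : ∀ t ∈ Ioo (0 : ℝ) 1, 0 < 1 - κ ^ 2 * t ^ 2 := by
    rintro t ⟨h0, h1⟩
    have : t ^ 2 < 1 := by nlinarith
    nlinarith [sq_nonneg κ, sq_nonneg t]
  set f : ℝ → ℝ := fun t => b * Real.sqrt (1 - κ ^ 2 * t ^ 2) with hf
  have hfsq : ∀ t ∈ Ioo (0 : ℝ) 1, f t ^ 2 = b ^ 2 - (b ^ 2 - a ^ 2) * t ^ 2 := by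
    intro t ht
    simp only [hf]
    rw [mul_pow, Real.sq_sqrt (hpos t ht).le, ← hκb]; ring
  have hfpos : ∀ t ∈ Ioo (0 : ℝ) 1, 0 < f t := fun t ht =>
    mul_pos hb (Real.sqrt_pos.2 (hpos t ht))
  have hd2 : 0 < b ^ 2 - a ^ 2 := by nlinarith
  have himg : f '' Ioo (0 : ℝ) 1 = Ioo a b := by
    apply Subset.antisymm
    · rintro _ ⟨t, ht, rfl⟩
      have h1 := hfsq t ht
      have h2 := hfpos t ht
      have ht2 : t ^ 2 < 1 := by nlinarith [ht.1, ht.2]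
      have ht3 : 0 < t ^ 2 := by have := ht.1; positivity
      constructor
      · apply lt_of_pow_lt_pow_left₀ 2 h2.le
        nlinarith
      · apply lt_of_pow_lt_pow_left₀ 2 hb.le
        nlinarith
    · rintro u ⟨hu1, hu2⟩
      have hu0 : 0 < u := ha.trans hu1
      have hq : 0 < (b ^ 2 - u ^ 2) / (b ^ 2 - a ^ 2) := div_pos (by nlinarith) hd2
      have hm : Real.sqrt ((b ^ 2 - u ^ 2) / (b ^ 2 - a ^ 2)) ∈ Ioo (0 : ℝ) 1 := by
        refine ⟨Real.sqrt_pos.2 hq, ?_⟩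
        rw [Real.sqrt_lt' one_pos, div_lt_iff₀ hd2]
        nlinarith
      refine ⟨_, hm, ?_⟩
      have h1 := hfsq _ hm
      rw [Real.sq_sqrt hq.le, mul_div_cancel₀ _ hd2.ne'] at h1
      have h3 : f (Real.sqrt ((b ^ 2 - u ^ 2) / (b ^ 2 - a ^ 2))) ^ 2 = u ^ 2 := by
        rw [h1]; ring
      exact (pow_left_inj₀ (hfpos _ hm).le hu0.le two_ne_zero).1 h3
  have hinj : InjOn f (Ioo 0 1) := by
    intro x hx y hy hxy
    have h1 := hfsq x hx
    have h2 := hfsq y hy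
    rw [hxy, h2] at h1
    have h3 : y ^ 2 = x ^ 2 := by
      apply mul_left_cancel₀ hd2.ne'; linarith
    exact ((pow_left_inj₀ hy.1.le hx.1.le two_ne_zero).1 h3).symm
  have hder : ∀ t ∈ Ioo (0 : ℝ) 1, HasDerivWithinAt f
      (b * (-(κ ^ 2 * (2 * t)) / (2 * Real.sqrt (1 - κ ^ 2 * t ^ 2)))) (Ioo 0 1) t := by
    intro t ht
    apply HasDerivAt.hasDerivWithinAt
    apply HasDerivAt.const_mul
    have h : HasDerivAt (fun y : ℝ => 1 - κ ^ 2 * y ^ 2) (-(κ ^ 2 * (2 * t))) t := by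
      have := ((hasDerivAt_pow 2 t).const_mul (κ ^ 2)).const_sub 1
      simpa using this
    exact h.sqrt (hpos t ht).ne'
  rw [← himg, integral_image_eq_integral_abs_deriv_smul measurableSet_Ioo hder hinj,
    ← integral_const_mul]
  apply setIntegral_congr_fun measurableSet_Ioo
  intro t ht
  have h0 := ht.1
  have hp := hpos t ht
  have h1t : 0 < 1 - t ^ 2 := by nlinarith [ht.1, ht.2]
  have e1 : (f t ^ 2 - a ^ 2) * (b ^ 2 - f t ^ 2) = (b ^ 2 * κ ^ 2 * t) ^ 2 * (1 - t ^ 2) := by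
    rw [hfsq t ht, hκb]; ring
  have e2 : |b * (-(κ ^ 2 * (2 * t)) / (2 * Real.sqrt (1 - κ ^ 2 * t ^ 2)))|
      = b * κ ^ 2 * t / Real.sqrt (1 - κ ^ 2 * t ^ 2) := by
    rw [← abs_neg, abs_of_nonneg]
    · field_simp
    · have : -(b * (-(κ ^ 2 * (2 * t)) / (2 * Real.sqrt (1 - κ ^ 2 * t ^ 2)))) =
        b * ((κ ^ 2 * (2 * t)) / (2 * Real.sqrt (1 - κ ^ 2 * t ^ 2))) := by ring
      rw [this]; positivity
  simp only [smul_eq_mul]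
  rw [e1, e2, Real.sqrt_mul (sq_nonneg _), Real.sqrt_sq (by positivity), Real.sqrt_mul h1t.le]
  have := Real.sqrt_pos.2 h1t
  have := Real.sqrt_pos.2 hp
  field_simp

open MeasureTheory Set in
lemma auxA (a b p q : ℝ) (ha : 0 < a) (hab : a < b) (hb1 : b < 1)
    (hp : p = (1 + a) / (1 - a)) (hq : q = (1 + b) / (1 - b)) :
    (∫ s in Ioo p q, 1 / Real.sqrt ((s - p) * (q - s) * (s - p⁻¹) * (s - q⁻¹))) =
      (Real.sqrt ((1 - a ^ 2) * (1 - b ^ 2)) / 2) *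
      ∫ u in Ioo a b, 1 / Real.sqrt ((u ^ 2 - a ^ 2) * (b ^ 2 - u ^ 2)) := by
  have hb : 0 < b := ha.trans hab
  have ha1 : a < 1 := hab.trans hb1
  have a1 : 0 < 1 - a := by linarith
  have b1 : 0 < 1 - b := by linarith
  set f : ℝ → ℝ := fun u => (1 + u) / (1 - u) with hf
  have himg : f '' Ioo a b = Ioo p q := by
    apply Subset.antisymm
    · rintro _ ⟨u, ⟨h1, h2⟩, rfl⟩
      have u1 : 0 < 1 - u := by linarith
      simp only [hf, hp, hq]
      constructor
      · rw [div_lt_div_iff₀ a1 u1]; nlinarith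
      · rw [div_lt_div_iff₀ u1 b1]; nlinarith
    · rintro s ⟨h1, h2⟩
      have hp0 : 0 < p := by rw [hp]; positivity
      have s1 : 0 < s + 1 := by linarith
      rw [hp, div_lt_iff₀ a1] at h1
      rw [hq, lt_div_iff₀ b1] at h2
      refine ⟨(s - 1) / (s + 1), ⟨?_, ?_⟩, ?_⟩
      · rw [lt_div_iff₀ s1]; nlinarith
      · rw [div_lt_iff₀ s1]; nlinarith
      · simp only [hf]
        have : 1 - (s - 1) / (s + 1) = 2 / (s + 1) := by field_simp; ring
        rw [this]; field_simp; ring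
  have hinj : InjOn f (Ioo a b) := by
    intro x hx y hy hxy
    have x1 : 0 < 1 - x := by linarith [hx.2]
    have y1 : 0 < 1 - y := by linarith [hy.2]
    simp only [hf] at hxy
    rw [div_eq_div_iff x1.ne' y1.ne'] at hxy
    linarith
  have hder : ∀ u ∈ Ioo a b, HasDerivWithinAt f (2 / (1 - u) ^ 2) (Ioo a b) u := by
    intro u hu
    have u1 : 0 < 1 - u := by linarith [hu.2]
    apply HasDerivAt.hasDerivWithinAt
    have := ((hasDerivAt_id' u).const_add 1).div ((hasDerivAt_id' u).const_sub 1) u1.ne'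
    have e : 2 / (1 - u) ^ 2 = (1 * (1 - u) - (1 + u) * -1) / (1 - u) ^ 2 := by ring
    rw [e]
    exact this
  rw [← himg, integral_image_eq_integral_abs_deriv_smul measurableSet_Ioo hder hinj,
    ← integral_const_mul]
  apply setIntegral_congr_fun measurableSet_Ioo
  rintro u ⟨h1, h2⟩
  have u1 : 0 < 1 - u := by linarith
  have hA : 0 < (1 - a ^ 2) * (1 - b ^ 2) := by
    apply mul_pos <;> nlinarith
  have hU : 0 < (u ^ 2 - a ^ 2) * (b ^ 2 - u ^ 2) := by
    apply mul_pos <;> nlinarith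
  have e1 : (f u - p) * (q - f u) * (f u - p⁻¹) * (f u - q⁻¹) =
      (4 / (1 - u) ^ 2) ^ 2 * (((u ^ 2 - a ^ 2) * (b ^ 2 - u ^ 2)) / ((1 - a ^ 2) * (1 - b ^ 2))) := by
    have x1 : f u - p = 2 * (u - a) / ((1 - u) * (1 - a)) := by
      simp only [hf, hp]; field_simp; ring
    have x2 : q - f u = 2 * (b - u) / ((1 - u) * (1 - b)) := by
      simp only [hf, hq]; field_simp; ring
    have x3 : f u - p⁻¹ = 2 * (u + a) / ((1 - u) * (1 + a)) := by
      simp only [hf, hp, inv_div]; field_simp; ring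
    have x4 : f u - q⁻¹ = 2 * (b + u) / ((1 - u) * (1 + b)) := by
      simp only [hf, hq, inv_div]; field_simp; ring
    have y1 : 1 - a ^ 2 = (1 - a) * (1 + a) := by ring
    have y2 : 1 - b ^ 2 = (1 - b) * (1 + b) := by ring
    rw [x1, x2, x3, x4, y1, y2]
    field_simp; ring
  simp only [smul_eq_mul]
  rw [e1, abs_of_pos (by positivity), Real.sqrt_mul (sq_nonneg _), Real.sqrt_sq (by positivity),
    Real.sqrt_div hU.le]
  have := Real.sqrt_pos.2 hA
  have := Real.sqrt_pos.2 hU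
  field_simp
  norm_num

theorem stmt14 (η₁ η₂ : ℝ) (h1 : 1 < η₁) (h2 : η₁ < η₂) :
    (∫ s in η₁..η₂,
        1 / Real.sqrt ((s - η₁) * (η₂ - s) * (s - η₁⁻¹) * (s - η₂⁻¹))) =
      Real.sqrt ((1 - lpar η₁ ^ 2) * (1 - lpar η₂ ^ 2)) / (2 * lpar η₂) *
        ellK (Real.sqrt (1 - (lpar η₁ / lpar η₂) ^ 2)) := by
  have p1 : 0 < η₁ + 1 := by linarith
  have p2 : 0 < η₂ + 1 := by linarith
  have ha : 0 < lpar η₁ := div_pos (by linarith) p1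
  have hab : lpar η₁ < lpar η₂ := by
    unfold lpar
    rw [div_lt_div_iff₀ p1 p2]; nlinarith
  have hb1 : lpar η₂ < 1 := by
    unfold lpar
    rw [div_lt_one p2]; linarith
  have inv : ∀ x : ℝ, 0 < x + 1 → x = (1 + lpar x) / (1 - lpar x) := by
    intro x hx
    have e : 1 - lpar x = 2 / (x + 1) := by unfold lpar; field_simp; ring
    rw [e]; unfold lpar; field_simp; ring
  have hb := ha.trans hab
  have hk : 0 < 1 - (lpar η₁ / lpar η₂) ^ 2 := by
    have : lpar η₁ / lpar η₂ < 1 := (div_lt_one hb).2 hab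
    have : 0 < lpar η₁ / lpar η₂ := by positivity
    nlinarith
  unfold ellK
  rw [intervalIntegral.integral_of_le h2.le, MeasureTheory.integral_Ioc_eq_integral_Ioo,
    intervalIntegral.integral_of_le zero_le_one, MeasureTheory.integral_Ioc_eq_integral_Ioo,
    auxA _ _ η₁ η₂ ha hab hb1 (inv _ p1) (inv _ p2),
    auxB _ _ _ ha hab (Real.sqrt_pos.2 hk) (Real.sq_sqrt hk.le)]
  rw [← mul_assoc]
  congr 1
  field_simp
end

section
/- With the data below, for every α ∈ (η₁, η₂], ∫_{η₁⁻¹}^{η₁} (s² + s⁻²) ds / ρ_α(s) = (2√((1 − l₁²)(1 − l(α)²)) / l(α)) · ∫₀¹ (1 + 8 l₁² x² / (1 − l₁² x²)²) dx / √((1 − x²)(1 − k(α)² x²)). -/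
/-- `ρ_α(s) = √((η₁−s)(s−η₁⁻¹)(α−s)(s−α⁻¹))`. -/
noncomputable def rho (η₁ α s : ℝ) : ℝ :=
  Real.sqrt ((η₁ - s) * (s - η₁⁻¹) * (α - s) * (s - α⁻¹))

lemma aux_point (a b y : ℝ) (ha : 0 < a) (hab : a < b) (hb : b < 1) (hy : y ∈ Set.Ioo (-1:ℝ) 1) :
    |2 * a / (1 - a * y) ^ 2| • ((((1 + a * y) / (1 - a * y)) ^ 2 + (((1 + a * y) / (1 - a * y))⁻¹) ^ 2) /
      rho ((1 + a) / (1 - a)) ((1 + b) / (1 - b)) ((1 + a * y) / (1 - a * y))) =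
    Real.sqrt ((1 - a ^ 2) * (1 - b ^ 2)) / b *
      ((1 + 8 * a ^ 2 * y ^ 2 / (1 - a ^ 2 * y ^ 2) ^ 2) /
              Real.sqrt ((1 - y ^ 2) * (1 - (a / b) ^ 2 * y ^ 2))) := by
  obtain ⟨hy1, hy2⟩ := hy
  have hb0 : 0 < b := ha.trans hab
  have p1 : 0 < 1 - a * y := by nlinarith
  have p2 : 0 < 1 + a * y := by nlinarith
  have p3 : 0 < 1 - a := by linarith
  have p4 : 0 < 1 - b := by linarith
  have p5 : 0 < 1 + a := by linarith
  have p6 : 0 < 1 + b := by linarith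
  have q1 : 0 < 1 - a ^ 2 := by nlinarith
  have q2 : 0 < 1 - b ^ 2 := by nlinarith
  have q3 : 0 < 1 - y ^ 2 := by nlinarith
  have k1 : a / b < 1 := (div_lt_one hb0).2 hab
  have k0 : 0 < a / b := by positivity
  have q4 : 0 < 1 - (a / b) ^ 2 * y ^ 2 := by nlinarith [sq_nonneg y, sq_nonneg (a / b)]
  have q5 : 1 - a ^ 2 * y ^ 2 = (1 - a * y) * (1 + a * y) := by ring
  have hT : 0 < Real.sqrt ((1 - a ^ 2) * (1 - b ^ 2)) := Real.sqrt_pos.2 (by positivity)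
  have hS : 0 < Real.sqrt ((1 - y ^ 2) * (1 - (a / b) ^ 2 * y ^ 2)) := Real.sqrt_pos.2 (by positivity)
  have hr : rho ((1 + a) / (1 - a)) ((1 + b) / (1 - b)) ((1 + a * y) / (1 - a * y)) =
      4 * a * b / (1 - a * y) ^ 2 * (Real.sqrt ((1 - y ^ 2) * (1 - (a / b) ^ 2 * y ^ 2)) /
        Real.sqrt ((1 - a ^ 2) * (1 - b ^ 2))) := by
    rw [← Real.sqrt_div (by positivity), ← Real.sqrt_sq (show 0 ≤ 4 * a * b / (1 - a * y) ^ 2 by positivity),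
      ← Real.sqrt_mul (by positivity), rho]
    congr 1
    have e1 : (1 + a) / (1 - a) - (1 + a * y) / (1 - a * y) = 2 * a * (1 - y) / ((1 - a) * (1 - a * y)) := by
      field_simp; ring
    have e2 : (1 + a * y) / (1 - a * y) - ((1 + a) / (1 - a))⁻¹ = 2 * a * (1 + y) / ((1 + a) * (1 - a * y)) := by
      rw [inv_div]; field_simp; ring
    have e3 : (1 + b) / (1 - b) - (1 + a * y) / (1 - a * y) = 2 * (b - a * y) / ((1 - b) * (1 - a * y)) := by
      field_simp; ring
    have e4 : (1 + a * y) / (1 - a * y) - ((1 + b) / (1 - b))⁻¹ = 2 * (b + a * y) / ((1 + b) * (1 - a * y)) := by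
      rw [inv_div]; field_simp; ring
    have e5 : 1 - a ^ 2 = (1 - a) * (1 + a) := by ring
    have e6 : 1 - b ^ 2 = (1 - b) * (1 + b) := by ring
    have e7 : (1 - (a / b) ^ 2 * y ^ 2) = (b - a * y) * (b + a * y) / b ^ 2 := by field_simp; ring
    rw [e1, e2, e3, e4, e5, e6, e7]
    field_simp
    ring
  rw [hr, abs_of_pos (by positivity), smul_eq_mul, q5, inv_div]
  field_simp
  ring

lemma aux_even_s15 (G : ℝ → ℝ) (hG : ∀ x, G |x| = G x) :
    ∫ x in Set.Ioo (-1:ℝ) 1, G x = 2 * ∫ x in Set.Ioo (0:ℝ) 1, G x := by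
  have h := integral_comp_abs (f := Set.indicator (Set.Iio (1:ℝ)) G)
  rw [MeasureTheory.setIntegral_indicator measurableSet_Iio, Set.Ioi_inter_Iio] at h
  rw [← h, ← MeasureTheory.integral_indicator measurableSet_Ioo]
  congr 1
  ext x
  simp only [Set.indicator, Set.mem_Ioo, Set.mem_Iio, abs_lt, hG]

lemma aux_image (a : ℝ) (ha : 0 < a) (ha1 : a < 1) :
    Set.image (fun y : ℝ => (1 + a * y) / (1 - a * y)) (Set.Ioo (-1) 1) =
      Set.Ioo ((1 + a) / (1 - a))⁻¹ ((1 + a) / (1 - a)) := by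
  have p3 : 0 < 1 - a := by linarith
  have p5 : 0 < 1 + a := by linarith
  rw [inv_div]
  ext s
  constructor
  · rintro ⟨y, ⟨hy1, hy2⟩, rfl⟩
    have p1 : 0 < 1 - a * y := by nlinarith
    constructor
    · simp only
      rw [div_lt_div_iff₀ p5 p1]; nlinarith
    · simp only
      rw [div_lt_div_iff₀ p1 p3]; nlinarith
  · rintro ⟨h1, h2⟩
    have hs : 0 < s := lt_trans (by positivity) h1
    rw [div_lt_iff₀ p5] at h1
    rw [lt_div_iff₀ p3] at h2
    refine ⟨(s - 1) / (a * (s + 1)), ⟨?_, ?_⟩, ?_⟩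
    · rw [lt_div_iff₀ (by positivity)]; nlinarith
    · rw [div_lt_iff₀ (by positivity)]; nlinarith
    · have : a * ((s - 1) / (a * (s + 1))) = (s - 1) / (s + 1) := by field_simp
      simp only [this]
      have h3 : 1 - (s - 1) / (s + 1) = 2 / (s + 1) := by field_simp; ring
      have h4 : 1 + (s - 1) / (s + 1) = 2 * s / (s + 1) := by field_simp; ring
      rw [h3, h4]; field_simp

lemma aux_main_s15 (a b : ℝ) (ha : 0 < a) (hab : a < b) (hb : b < 1) :
    (∫ s in Set.Ioo ((1 + a) / (1 - a))⁻¹ ((1 + a) / (1 - a)),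
      (s ^ 2 + (s⁻¹) ^ 2) / rho ((1 + a) / (1 - a)) ((1 + b) / (1 - b)) s) =
        2 * Real.sqrt ((1 - a ^ 2) * (1 - b ^ 2)) / b *
          ∫ x in Set.Ioo (0 : ℝ) 1,
            (1 + 8 * a ^ 2 * x ^ 2 / (1 - a ^ 2 * x ^ 2) ^ 2) /
              Real.sqrt ((1 - x ^ 2) * (1 - (a / b) ^ 2 * x ^ 2)) := by
  have pos : ∀ y ∈ Set.Ioo (-1:ℝ) 1, 0 < 1 - a * y := by
    rintro y ⟨h1, h2⟩; nlinarith
  rw [← aux_image a ha (hab.trans hb),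
    MeasureTheory.integral_image_eq_integral_abs_deriv_smul (f' := fun y => 2 * a / (1 - a * y) ^ 2)
      measurableSet_Ioo]
  · rw [MeasureTheory.setIntegral_congr_fun measurableSet_Ioo
      (fun y hy => aux_point a b y ha hab hb hy), MeasureTheory.integral_const_mul, aux_even_s15]
    · ring
    · intro x; simp only [sq_abs]
  · intro y hy
    have p := pos y hy
    have d1 : HasDerivAt (fun y : ℝ => 1 + a * y) a y := by
      simpa using ((hasDerivAt_id y).const_mul a).const_add 1
    have d2 : HasDerivAt (fun y : ℝ => 1 - a * y) (-a) y := by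
      simpa using ((hasDerivAt_id y).const_mul a).const_sub 1
    have d := (d1.fun_div d2 p.ne').hasDerivWithinAt (s := Set.Ioo (-1:ℝ) 1)
    have e : (a * (1 - a * y) - (1 + a * y) * -a) / (1 - a * y) ^ 2 = 2 * a / (1 - a * y) ^ 2 := by
      ring
    rw [e] at d
    exact d
  · intro x hx y hy hxy
    have p := pos x hx
    have q := pos y hy
    simp only at hxy
    rw [div_eq_div_iff p.ne' q.ne'] at hxy
    have : a * (x - y) = 0 := by linarith
    rcases mul_eq_zero.1 this with h | h <;> linarith

/- STATEMENT 15: Fix 1 < η₁ < η₂ and l₁ := (η₁−1)/(η₁+1).  For every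
α ∈ (η₁, η₂], with l(α) := (α−1)/(α+1) and k(α) := l₁/l(α),
∫_{η₁⁻¹}^{η₁} (s² + s⁻²)/ρ_α(s) ds
 = (2√((1 − l₁²)(1 − l(α)²)) / l(α)) ·
   ∫₀¹ (1 + 8 l₁² x² / (1 − l₁² x²)²) / √((1 − x²)(1 − k(α)² x²)) dx. -/
theorem stmt15 (η₁ η₂ : ℝ) (h1 : 1 < η₁) (h2 : η₁ < η₂) :
    ∀ α ∈ Set.Ioc η₁ η₂,
      (∫ s in η₁⁻¹..η₁, (s ^ 2 + (s⁻¹) ^ 2) / rho η₁ α s) =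
        2 * Real.sqrt ((1 - lpar η₁ ^ 2) * (1 - lpar α ^ 2)) / lpar α *
          ∫ x in (0 : ℝ)..1,
            (1 + 8 * lpar η₁ ^ 2 * x ^ 2 / (1 - lpar η₁ ^ 2 * x ^ 2) ^ 2) /
              Real.sqrt ((1 - x ^ 2) * (1 - (lpar η₁ / lpar α) ^ 2 * x ^ 2)) := by
  intro α ⟨hα, _⟩
  have e : ∀ x : ℝ, 1 < x → x = (1 + lpar x) / (1 - lpar x) := by
    intro x hx
    have h3 : 1 - lpar x = 2 / (x + 1) := by unfold lpar; field_simp; ring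
    have h4 : 1 + lpar x = 2 * x / (x + 1) := by unfold lpar; field_simp; ring
    rw [h3, h4]; field_simp
  have ha : 0 < lpar η₁ := div_pos (by linarith) (by linarith)
  have hab : lpar η₁ < lpar α := by
    unfold lpar
    rw [div_lt_div_iff₀ (by linarith) (by linarith)]; nlinarith
  have hb : lpar α < 1 := by
    unfold lpar
    rw [div_lt_one (by linarith)]; linarith
  have hle : η₁⁻¹ ≤ η₁ := (inv_le_one_of_one_le₀ h1.le).trans h1.le
  have H := aux_main_s15 _ _ ha hab hb
  rw [← e η₁ h1, ← e α (h1.trans hα)] at H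
  rw [intervalIntegral.integral_of_le hle, intervalIntegral.integral_of_le zero_le_one,
    MeasureTheory.integral_Ioc_eq_integral_Ioo, MeasureTheory.integral_Ioc_eq_integral_Ioo]
  exact H
end

section
/- With the data below, for every α ∈ (η₁, η₂) one has D(α) > 0, the function α ↦ D(α) is strictly increasing on (η₁, η₂), and the function α ↦ N(α)/D(α) is strictly decreasing on (η₁, η₂). -/
/-- `k(α) = l₁/l(α)` (with `l₁ = l(η₁)`). -/
noncomputable def kfun (η₁ α : ℝ) : ℝ := lpar η₁ / lpar α

/-- `Q(α) = (∫_{η₁⁻¹}^{η₁} (s²+s⁻²)/ρ_α(s) ds)/(∫_{η₁⁻¹}^{η₁} ds/ρ_α(s))`. -/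
noncomputable def Qfun (η₁ α : ℝ) : ℝ :=
  (∫ s in η₁⁻¹..η₁, (s ^ 2 + (s⁻¹) ^ 2) / rho η₁ α s) /
    (∫ s in η₁⁻¹..η₁, 1 / rho η₁ α s)

/-- `D(α) = α + α⁻¹ + 2 − 4Π(l₁², k(α))/K(k(α))`. -/
noncomputable def Dfun (η₁ α : ℝ) : ℝ :=
  α + α⁻¹ + 2 - 4 * ellPi (lpar η₁ ^ 2) (kfun η₁ α) / ellK (kfun η₁ α)

/-- `N(α) = −α² − α⁻² + ((α + α⁻¹ + η₁ + η₁⁻¹)/2)·D(α) + Q(α)`. -/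
noncomputable def Nfun (η₁ α : ℝ) : ℝ :=
  -α ^ 2 - (α⁻¹) ^ 2 + (α + α⁻¹ + η₁ + η₁⁻¹) / 2 * Dfun η₁ α + Qfun η₁ α

open MeasureTheory Set

/-- `x = s + s⁻¹` in the Legendre variable. -/
noncomputable def XX (l t : ℝ) : ℝ := 4 / (1 - l ^ 2 * t ^ 2) - 2

/-- fixed singular weight -/
noncomputable def gg (l t : ℝ) : ℝ := 1 / Real.sqrt ((1 - t ^ 2) * (1 - l ^ 2 * t ^ 2))

lemma den_pos {l t : ℝ} (hl0 : 0 < l) (hl1 : l < 1) (ht : t ∈ Icc (-1 : ℝ) 1) :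
    0 < 1 - l ^ 2 * t ^ 2 := by
  have h1 : t ^ 2 ≤ 1 := by nlinarith [ht.1, ht.2]
  have h2 : l ^ 2 < 1 := by nlinarith
  nlinarith [sq_nonneg l, sq_nonneg t]

lemma XX_cont {l : ℝ} (hl0 : 0 < l) (hl1 : l < 1) : ContinuousOn (XX l) (Icc (-1) 1) := by
  unfold XX
  apply ContinuousOn.sub _ continuousOn_const
  apply ContinuousOn.div continuousOn_const (by fun_prop)
  intro t ht
  exact (den_pos hl0 hl1 ht).ne'

lemma XX_le {l t : ℝ} (hl0 : 0 < l) (hl1 : l < 1) (ht : t ∈ Icc (-1 : ℝ) 1) :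
    XX l t ≤ 4 / (1 - l ^ 2) - 2 := by
  unfold XX
  have h1 : t ^ 2 ≤ 1 := by nlinarith [ht.1, ht.2]
  have h2 : 0 < 1 - l ^ 2 := by nlinarith
  have : 1 - l ^ 2 ≤ 1 - l ^ 2 * t ^ 2 := by nlinarith [sq_nonneg l]
  gcongr

lemma gg_pos {l t : ℝ} (hl0 : 0 < l) (hl1 : l < 1) (ht : t ∈ Ioo (-1 : ℝ) 1) : 0 < gg l t := by
  unfold gg
  have := den_pos hl0 hl1 (Ioo_subset_Icc_self ht)
  have h1 : 0 < 1 - t ^ 2 := by nlinarith [ht.1, ht.2]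
  positivity

lemma gg_int {l : ℝ} (hl0 : 0 < l) (hl1 : l < 1) :
    IntervalIntegrable (gg l) volume 0 1 := by
  have h0 : IntervalIntegrable (fun t : ℝ => (1 - t) ^ (-(1/2) : ℝ)) volume 0 1 := by
    have := (intervalIntegral.intervalIntegrable_rpow' (a := 0) (b := 1)
      (r := -(1/2)) (by norm_num)).comp_sub_left 1
    simpa using this.symm
  have h1 : ContinuousOn (fun t : ℝ => 1 / Real.sqrt ((1 + t) * (1 - l ^ 2 * t ^ 2)))
      (uIcc 0 1) := by
    rw [uIcc_of_le zero_le_one]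
    apply ContinuousOn.div continuousOn_const (by fun_prop)
    intro t ht
    have := den_pos hl0 hl1 (t := t) ⟨by linarith [ht.1], ht.2⟩
    have h1 : 0 < 1 + t := by linarith [ht.1]
    positivity
  have h2 := h0.continuousOn_mul h1
  refine h2.congr ?_
  intro t ht
  rw [uIoc_of_le zero_le_one] at ht
  have := den_pos hl0 hl1 (t := t) ⟨by linarith [ht.1], ht.2⟩
  have h1 : 0 < 1 + t := by linarith [ht.1]
  have h3 : 0 ≤ 1 - t := by linarith [ht.2]
  simp only [gg]
  rw [Real.rpow_neg h3, ← Real.sqrt_eq_rpow, ← one_div, ← mul_div_mul_comm, one_mul,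
    ← Real.sqrt_mul (by positivity)]
  congr 2
  ring

lemma J_int {l : ℝ} (hl0 : 0 < l) (hl1 : l < 1) {f : ℝ → ℝ} (hf : ContinuousOn f (Icc (-1) 1)) :
    IntervalIntegrable (fun t => f t * gg l t) volume 0 1 := by
  apply (gg_int hl0 hl1).continuousOn_mul
  rw [uIcc_of_le zero_le_one]
  exact hf.mono (Icc_subset_Icc (by norm_num) le_rfl)

lemma J_lt {l : ℝ} (hl0 : 0 < l) (hl1 : l < 1) {f h : ℝ → ℝ} (hf : ContinuousOn f (Icc (-1) 1))
    (hh : ContinuousOn h (Icc (-1) 1)) (hlt : ∀ t ∈ Icc (-1 : ℝ) 1, f t < h t) :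
    ∫ t in (0:ℝ)..1, f t * gg l t < ∫ t in (0:ℝ)..1, h t * gg l t := by
  have i1 := J_int hl0 hl1 hf
  have i2 := J_int hl0 hl1 hh
  have : 0 < ∫ t in (0:ℝ)..1, (h t * gg l t - f t * gg l t) := by
    apply intervalIntegral.intervalIntegral_pos_of_pos_on (i2.sub i1) _ zero_lt_one
    intro t ht
    have ht' : t ∈ Ioo (-1 : ℝ) 1 := ⟨by linarith [ht.1], ht.2⟩
    have := gg_pos hl0 hl1 ht'
    have := hlt t (Ioo_subset_Icc_self ht')
    nlinarith
  rw [intervalIntegral.integral_sub i2 i1] at this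
  linarith

lemma J_le {l : ℝ} (hl0 : 0 < l) (hl1 : l < 1) {f h : ℝ → ℝ} (hf : ContinuousOn f (Icc (-1) 1))
    (hh : ContinuousOn h (Icc (-1) 1)) (hlt : ∀ t ∈ Icc (-1 : ℝ) 1, f t ≤ h t) :
    ∫ t in (0:ℝ)..1, f t * gg l t ≤ ∫ t in (0:ℝ)..1, h t * gg l t := by
  apply intervalIntegral.integral_mono_on zero_le_one (J_int hl0 hl1 hf) (J_int hl0 hl1 hh)
  intro t ht
  have ht' : t ∈ Icc (-1 : ℝ) 1 := ⟨by linarith [ht.1], ht.2⟩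
  apply mul_le_mul_of_nonneg_right (hlt t ht')
  unfold gg; positivity

lemma J_pos {l : ℝ} (hl0 : 0 < l) (hl1 : l < 1) {h : ℝ → ℝ}
    (hh : ContinuousOn h (Icc (-1) 1)) (hlt : ∀ t ∈ Icc (-1 : ℝ) 1, 0 < h t) :
    0 < ∫ t in (0:ℝ)..1, h t * gg l t := by
  have := J_lt hl0 hl1 (f := fun _ => 0) continuousOn_const hh hlt
  simpa using this

/-- change of variables plus evenness -/
lemma cov {η : ℝ} (h1 : 1 < η) (F : ℝ → ℝ) {f : ℝ → ℝ}
    (hf : ContinuousOn f (Icc (-1) 1)) (heven : ∀ t, f (-t) = f t)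
    (hF : ∀ t ∈ Ioo (-1 : ℝ) 1, 2 * lpar η / (1 - lpar η * t) ^ 2 *
      F ((1 + lpar η * t) / (1 - lpar η * t)) = f t * gg (lpar η) t) :
    ∫ s in η⁻¹..η, F s = 2 * ∫ t in (0:ℝ)..1, f t * gg (lpar η) t := by
  have hη : η = (1 + lpar η) / (1 - lpar η) := by
    unfold lpar
    have : η + 1 ≠ 0 := by linarith
    have h' : 1 - (η - 1) / (η + 1) ≠ 0 := by
      field_simp; norm_num; exact this
    field_simp
    ring
  have hl0 : 0 < lpar η := by unfold lpar; apply div_pos <;> linarith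
  have hl1 : lpar η < 1 := by unfold lpar; rw [div_lt_one (by linarith)]; linarith
  set l := lpar η with hl
  have hinv : η⁻¹ = (1 - l) / (1 + l) := by rw [hη, inv_div]
  have hle : η⁻¹ ≤ η := by
    have := inv_le_one_of_one_le₀ h1.le
    linarith
  have hd : ∀ t ∈ Icc (-1 : ℝ) 1, 0 < 1 - l * t := fun t ht => by nlinarith [ht.1, ht.2]
  have himg : (fun t => (1 + l * t) / (1 - l * t)) '' Ioo (-1 : ℝ) 1 = Ioo η⁻¹ η := by
    ext s
    constructor
    · rintro ⟨t, ht, rfl⟩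
      have := hd t (Ioo_subset_Icc_self ht)
      rw [hinv, hη]
      constructor
      · simp only []
        rw [div_lt_div_iff₀ (by linarith) this]
        nlinarith [ht.1, ht.2]
      · simp only []
        rw [div_lt_div_iff₀ this (by linarith)]
        nlinarith [ht.1, ht.2]
    · rintro ⟨ha, hb⟩
      have hs : 0 < s := lt_trans (by positivity) ha
      rw [hinv, div_lt_iff₀ (by linarith)] at ha
      rw [hη, lt_div_iff₀ (by linarith)] at hb
      refine ⟨(s - 1) / (l * (s + 1)), ⟨?_, ?_⟩, ?_⟩
      · rw [lt_div_iff₀ (by positivity)]; nlinarith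
      · rw [div_lt_iff₀ (by positivity)]; nlinarith
      · have e : l * ((s - 1) / (l * (s + 1))) = (s - 1) / (s + 1) := by field_simp
        simp only []
        rw [e]
        have : s + 1 ≠ 0 := by positivity
        have h' : 1 - (s - 1) / (s + 1) ≠ 0 := by
          field_simp; norm_num; exact this
        field_simp
        ring
  have hder : ∀ t ∈ Ioo (-1 : ℝ) 1, HasDerivWithinAt (fun t => (1 + l * t) / (1 - l * t))
      (2 * l / (1 - l * t) ^ 2) (Ioo (-1) 1) t := by
    intro t ht
    have h := hd t (Ioo_subset_Icc_self ht)
    have a1 : HasDerivAt (fun t => 1 + l * t) l t := by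
      simpa using ((hasDerivAt_id t).const_mul l).const_add 1
    have a2 : HasDerivAt (fun t => 1 - l * t) (-l) t := by
      simpa using ((hasDerivAt_id t).const_mul l).const_sub 1
    have a3 := a1.div a2 h.ne'
    refine (a3.congr_deriv ?_).hasDerivWithinAt
    congr 1
    ring
  have hinj : InjOn (fun t => (1 + l * t) / (1 - l * t)) (Ioo (-1 : ℝ) 1) := by
    intro a ha b hb hab
    have h1 := hd a (Ioo_subset_Icc_self ha)
    have h2 := hd b (Ioo_subset_Icc_self hb)
    simp only [] at hab
    rw [div_eq_div_iff h1.ne' h2.ne'] at hab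
    have : l * (a - b) = 0 := by linarith
    rcases mul_eq_zero.mp this with h | h
    · exact absurd h hl0.ne'
    · linarith
  have hgev : ∀ t, gg l (-t) = gg l t := by intro t; simp [gg]
  have iI := J_int hl0 hl1 hf
  have iI' : IntervalIntegrable (fun t => f t * gg l t) volume (-1) 0 := by
    have := (IntervalIntegrable.comp_sub_left iI 0).symm
    simpa [heven, hgev] using this
  have hsym : ∫ t in (-1:ℝ)..0, f t * gg l t = ∫ t in (0:ℝ)..1, f t * gg l t := by
    have := intervalIntegral.integral_comp_neg (a := 0) (b := 1) (fun t => f t * gg l t)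
    simp only [heven, hgev, neg_zero] at this
    exact this.symm
  rw [intervalIntegral.integral_of_le hle, integral_Ioc_eq_integral_Ioo, ← himg,
    integral_image_eq_integral_abs_deriv_smul measurableSet_Ioo hder hinj]
  have : ∫ t in Ioo (-1 : ℝ) 1, |2 * l / (1 - l * t) ^ 2| • F ((1 + l * t) / (1 - l * t))
      = ∫ t in Ioo (-1 : ℝ) 1, f t * gg l t := by
    apply setIntegral_congr_fun measurableSet_Ioo
    intro t ht
    simp only [smul_eq_mul]
    rw [← hF t ht, abs_of_nonneg (by positivity)]
  rw [this, ← integral_Ioc_eq_integral_Ioo, ← intervalIntegral.integral_of_le (by norm_num),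
    ← intervalIntegral.integral_add_adjacent_intervals iI' iI, hsym]
  ring

/-- `A(α) = α + α⁻¹` facts. -/
lemma A_gt {η α : ℝ} (h1 : 1 < η) (h2 : η < α) : η + η⁻¹ < α + α⁻¹ := by
  have e : α + α⁻¹ - (η + η⁻¹) = (α - η) * (α * η - 1) / (α * η) := by
    have : α ≠ 0 := by linarith
    have : η ≠ 0 := by linarith
    field_simp; ring
  have : 0 < (α - η) * (α * η - 1) / (α * η) := by
    have : 0 < α - η := by linarith
    have : 0 < α * η - 1 := by nlinarith
    have : 0 < α * η := by linarith
    positivity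
  linarith

lemma A_eq {η : ℝ} (h1 : 1 < η) : 4 / (1 - lpar η ^ 2) - 2 = η + η⁻¹ := by
  have e : 1 - lpar η ^ 2 = 4 * η / (η + 1) ^ 2 := by
    unfold lpar
    have : η + 1 ≠ 0 := by linarith
    field_simp; ring
  rw [e]
  have : η ≠ 0 := by linarith
  field_simp; ring

lemma lpar_pos {η : ℝ} (h1 : 1 < η) : 0 < lpar η := by unfold lpar; apply div_pos <;> linarith
lemma lpar_lt {η : ℝ} (h1 : 1 < η) : lpar η < 1 := by
  unfold lpar; rw [div_lt_one (by linarith)]; linarith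

lemma AX_pos {η α t : ℝ} (h1 : 1 < η) (h2 : η < α) (ht : t ∈ Icc (-1 : ℝ) 1) :
    0 < α + α⁻¹ - XX (lpar η) t := by
  have := XX_le (lpar_pos h1) (lpar_lt h1) ht
  rw [A_eq h1] at this
  linarith [A_gt h1 h2]

/-- the `1/√(A - X)` factor -/
noncomputable def rr (η α t : ℝ) : ℝ := Real.sqrt (α + α⁻¹ - XX (lpar η) t)

lemma rr_pos {η α t : ℝ} (h1 : 1 < η) (h2 : η < α) (ht : t ∈ Icc (-1 : ℝ) 1) :
    0 < rr η α t := Real.sqrt_pos.mpr (AX_pos h1 h2 ht)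

lemma rr_sq {η α t : ℝ} (h1 : 1 < η) (h2 : η < α) (ht : t ∈ Icc (-1 : ℝ) 1) :
    rr η α t ^ 2 = α + α⁻¹ - XX (lpar η) t := Real.sq_sqrt (AX_pos h1 h2 ht).le

lemma rr_cont {η : ℝ} (α : ℝ) (h1 : 1 < η) : ContinuousOn (rr η α) (Icc (-1) 1) := by
  unfold rr
  exact (continuousOn_const.sub (XX_cont (lpar_pos h1) (lpar_lt h1))).sqrt

lemma rri_cont {η α : ℝ} (h1 : 1 < η) (h2 : η < α) :
    ContinuousOn (fun t => (rr η α t)⁻¹) (Icc (-1) 1) :=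
  (rr_cont α h1).inv₀ fun _ ht => (rr_pos h1 h2 ht).ne'

lemma XX_even (l t : ℝ) : XX l (-t) = XX l t := by simp [XX]
lemma rr_even (η α t : ℝ) : rr η α (-t) = rr η α t := by simp [rr, XX_even]

/-- Legendre weight. -/
lemma weight {η α t : ℝ} (h1 : 1 < η) (h2 : η < α) (ht : t ∈ Icc (-1 : ℝ) 1) :
    1 / Real.sqrt ((1 - t ^ 2) * (1 - kfun η α ^ 2 * t ^ 2)) =
      Real.sqrt ((α - 1) ^ 2 / α) * ((rr η α t)⁻¹ * gg (lpar η) t) := by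
  have hd := den_pos (lpar_pos h1) (lpar_lt h1) ht
  have hA := AX_pos h1 h2 ht
  have hα : 0 < α := by linarith
  have hα1 : 0 < α - 1 := by linarith
  have ht2 : 0 ≤ 1 - t ^ 2 := by nlinarith [ht.1, ht.2]
  have hc : 0 < (α - 1) ^ 2 / α := by positivity
  have key : 1 - kfun η α ^ 2 * t ^ 2 = (α + α⁻¹ - XX (lpar η) t) * (1 - lpar η ^ 2 * t ^ 2)
      / ((α - 1) ^ 2 / α) := by
    have e : kfun η α = lpar η * (α + 1) / (α - 1) := by
      unfold kfun
      have : lpar α = (α - 1) / (α + 1) := rfl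
      rw [this]; field_simp
    rw [e]; unfold XX
    field_simp
    ring
  have e2 : (1 - t ^ 2) * (1 - kfun η α ^ 2 * t ^ 2) = (α + α⁻¹ - XX (lpar η) t) *
      ((1 - t ^ 2) * (1 - lpar η ^ 2 * t ^ 2)) / ((α - 1) ^ 2 / α) := by
    rw [key]; ring
  rw [e2, Real.sqrt_div' _ hc.le, Real.sqrt_mul hA.le, rr, gg, one_div_div]
  rw [div_eq_mul_inv, mul_inv, one_div]

lemma rho_weight {η α t : ℝ} (h1 : 1 < η) (h2 : η < α) (ht : t ∈ Ioo (-1 : ℝ) 1) :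
    2 * lpar η / (1 - lpar η * t) ^ 2 *
      (1 / rho η α ((1 + lpar η * t) / (1 - lpar η * t))) =
      Real.sqrt (1 - lpar η ^ 2) * ((rr η α t)⁻¹ * gg (lpar η) t) := by
  have ht' := Ioo_subset_Icc_self ht
  have hd := den_pos (lpar_pos h1) (lpar_lt h1) ht'
  have hA := AX_pos h1 h2 ht'
  have hl0 := lpar_pos h1
  have hl1 := lpar_lt h1
  have hη := A_eq h1
  have hη0 : 0 < η := by linarith
  have hα : 0 < α := by linarith
  set l := lpar η with hl
  have ht2 : 0 < 1 - t ^ 2 := by nlinarith [ht.1, ht.2]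
  have hl2 : 0 < 1 - l ^ 2 := by nlinarith
  have hm : 0 < 1 - l * t := by nlinarith [ht.1, ht.2]
  have hp : 0 < 1 + l * t := by nlinarith [ht.1, ht.2]
  have hx : (1 + l * t) / (1 - l * t) + ((1 + l * t) / (1 - l * t))⁻¹ = XX l t := by
    unfold XX
    have : 1 - l ^ 2 * t ^ 2 = (1 - l * t) * (1 + l * t) := by ring
    rw [this]; field_simp; ring
  set s := (1 + l * t) / (1 - l * t) with hs
  have hs0 : 0 < s := by positivity
  have f1 : (η - s) * (s - η⁻¹) = s * (η + η⁻¹ - XX l t) := by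
    rw [← hx]; field_simp; ring
  have f2 : (α - s) * (s - α⁻¹) = s * (α + α⁻¹ - XX l t) := by
    rw [← hx]; field_simp; ring
  have f3 : η + η⁻¹ - XX l t = (2 * l / (1 - l ^ 2 * t ^ 2)) ^ 2 *
      ((1 - t ^ 2) * (1 - l ^ 2 * t ^ 2)) / (1 - l ^ 2) := by
    rw [← hη]; unfold XX; field_simp; ring
  have f4 : rho η α s = s * (2 * l / (1 - l ^ 2 * t ^ 2)) *
      Real.sqrt ((1 - t ^ 2) * (1 - l ^ 2 * t ^ 2)) / Real.sqrt (1 - l ^ 2) * rr η α t := by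
    unfold rho rr
    have : (η - s) * (s - η⁻¹) * (α - s) * (s - α⁻¹) = (s * (2 * l / (1 - l ^ 2 * t ^ 2))) ^ 2 *
      ((1 - t ^ 2) * (1 - l ^ 2 * t ^ 2)) / (1 - l ^ 2) * (α + α⁻¹ - XX l t) := by
      rw [mul_assoc ((η - s) * (s - η⁻¹)), f1, f2, f3]; ring
    rw [this, Real.sqrt_mul (by positivity), Real.sqrt_div (by positivity),
      Real.sqrt_mul (by positivity), Real.sqrt_sq (by positivity)]
  have hr := rr_pos h1 h2 ht'
  rw [f4, gg]
  have g1 : 0 < Real.sqrt ((1 - t ^ 2) * (1 - l ^ 2 * t ^ 2)) := by positivity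
  have g2 : 0 < Real.sqrt (1 - l ^ 2) := by positivity
  have f5 : 2 * l / (1 - l * t) ^ 2 = s * (2 * l / (1 - l ^ 2 * t ^ 2)) := by
    rw [hs]
    have : 1 - l ^ 2 * t ^ 2 = (1 - l * t) * (1 + l * t) := by ring
    rw [this]; field_simp
  rw [f5]
  have g3 : 0 < s * (2 * l / (1 - l ^ 2 * t ^ 2)) := by positivity
  generalize s * (2 * l / (1 - l ^ 2 * t ^ 2)) = z at *
  field_simp

noncomputable def Mm (η α : ℝ) : ℝ := ∫ t in (0:ℝ)..1, (rr η α t)⁻¹ * gg (lpar η) t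
noncomputable def M1 (η α : ℝ) : ℝ := ∫ t in (0:ℝ)..1, rr η α t * gg (lpar η) t
noncomputable def M3 (η α : ℝ) : ℝ := ∫ t in (0:ℝ)..1, rr η α t ^ 3 * gg (lpar η) t
noncomputable def P1 (η α : ℝ) : ℝ :=
  ∫ t in (0:ℝ)..1, (XX (lpar η) t * (rr η α t)⁻¹) * gg (lpar η) t
noncomputable def P2 (η α : ℝ) : ℝ :=
  ∫ t in (0:ℝ)..1, (XX (lpar η) t ^ 2 * (rr η α t)⁻¹) * gg (lpar η) t

lemma comb {η α : ℝ} (h1 : 1 < η) (h2 : η < α) (a b c : ℝ) (f : ℝ → ℝ)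
    (hf : ∀ t ∈ Icc (0 : ℝ) 1, f t = (a + b * XX (lpar η) t + c * XX (lpar η) t ^ 2)
      * (rr η α t)⁻¹ * gg (lpar η) t) :
    ∫ t in (0:ℝ)..1, f t = a * Mm η α + b * P1 η α + c * P2 η α := by
  have hl0 := lpar_pos h1
  have hl1 := lpar_lt h1
  have c0 := rri_cont h1 h2
  have cX := XX_cont hl0 hl1
  have i0 := J_int hl0 hl1 c0
  have i1 := J_int hl0 hl1 (f := fun t => XX (lpar η) t * (rr η α t)⁻¹) (cX.mul c0)
  have i2 := J_int hl0 hl1 (f := fun t => XX (lpar η) t ^ 2 * (rr η α t)⁻¹)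
    ((cX.pow 2).mul c0)
  unfold Mm P1 P2
  rw [← intervalIntegral.integral_const_mul, ← intervalIntegral.integral_const_mul,
    ← intervalIntegral.integral_const_mul, ← intervalIntegral.integral_add
      (i0.const_mul a) (i1.const_mul b), ← intervalIntegral.integral_add
      ((i0.const_mul a).add (i1.const_mul b)) (i2.const_mul c)]
  apply intervalIntegral.integral_congr
  intro t ht
  rw [uIcc_of_le zero_le_one] at ht
  simp only []
  rw [hf t ht]
  ring

lemma sub_Icc {t : ℝ} (ht : t ∈ Icc (0 : ℝ) 1) : t ∈ Icc (-1 : ℝ) 1 :=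
  ⟨by linarith [ht.1], ht.2⟩

lemma ellK_eq {η α : ℝ} (h1 : 1 < η) (h2 : η < α) :
    ellK (kfun η α) = Real.sqrt ((α - 1) ^ 2 / α) * Mm η α := by
  unfold ellK
  rw [comb h1 h2 (Real.sqrt ((α - 1) ^ 2 / α)) 0 0]
  · ring
  · intro t ht
    rw [weight h1 h2 (sub_Icc ht)]; ring

lemma ellPi_eq {η α : ℝ} (h1 : 1 < η) (h2 : η < α) :
    ellPi (lpar η ^ 2) (kfun η α) =
      Real.sqrt ((α - 1) ^ 2 / α) * ((P1 η α + 2 * Mm η α) / 4) := by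
  unfold ellPi
  rw [comb h1 h2 (Real.sqrt ((α - 1) ^ 2 / α) / 2) (Real.sqrt ((α - 1) ^ 2 / α) / 4) 0]
  · ring
  · intro t ht
    rw [← one_div_mul_one_div, weight h1 h2 (sub_Icc ht)]
    unfold XX; ring

lemma M1_eq {η α : ℝ} (h1 : 1 < η) (h2 : η < α) :
    M1 η α = (α + α⁻¹) * Mm η α - P1 η α := by
  unfold M1
  rw [comb h1 h2 (α + α⁻¹) (-1) 0]
  · ring
  · intro t ht
    have a := rr_sq h1 h2 (sub_Icc ht)
    have b := rr_pos h1 h2 (sub_Icc ht)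
    have : α + α⁻¹ + -1 * XX (lpar η) t + 0 * XX (lpar η) t ^ 2 = rr η α t ^ 2 := by
      rw [a]; ring
    rw [this]; field_simp

lemma M3_eq {η α : ℝ} (h1 : 1 < η) (h2 : η < α) :
    M3 η α = (α + α⁻¹) ^ 2 * Mm η α - 2 * (α + α⁻¹) * P1 η α + P2 η α := by
  unfold M3
  rw [comb h1 h2 ((α + α⁻¹) ^ 2) (-(2 * (α + α⁻¹))) 1]
  · ring
  · intro t ht
    have a := rr_sq h1 h2 (sub_Icc ht)
    have b := rr_pos h1 h2 (sub_Icc ht)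
    have : (α + α⁻¹) ^ 2 + -(2 * (α + α⁻¹)) * XX (lpar η) t + 1 * XX (lpar η) t ^ 2
        = (rr η α t ^ 2) ^ 2 := by
      rw [a]; ring
    rw [this]; field_simp

lemma Mm_pos {η α : ℝ} (h1 : 1 < η) (h2 : η < α) : 0 < Mm η α :=
  J_pos (lpar_pos h1) (lpar_lt h1) (rri_cont h1 h2) fun _ ht => inv_pos.mpr (rr_pos h1 h2 ht)

lemma M1_pos {η α : ℝ} (h1 : 1 < η) (h2 : η < α) : 0 < M1 η α :=
  J_pos (lpar_pos h1) (lpar_lt h1) (rr_cont α h1) fun _ ht => rr_pos h1 h2 ht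

lemma M3_pos {η α : ℝ} (h1 : 1 < η) (h2 : η < α) : 0 < M3 η α :=
  J_pos (lpar_pos h1) (lpar_lt h1) ((rr_cont α h1).pow 3) fun _ ht => pow_pos (rr_pos h1 h2 ht) 3

lemma Q_eq {η α : ℝ} (h1 : 1 < η) (h2 : η < α) :
    Qfun η α = P2 η α / Mm η α - 2 := by
  have hl0 := lpar_pos h1
  have hl1 := lpar_lt h1
  have c0 := rri_cont h1 h2
  have cX := XX_cont hl0 hl1
  have e1 : ∫ s in η⁻¹..η, 1 / rho η α s = 2 * (Real.sqrt (1 - lpar η ^ 2) * Mm η α) := by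
    rw [cov h1 _ (f := fun t => Real.sqrt (1 - lpar η ^ 2) * (rr η α t)⁻¹)
      (continuousOn_const.mul c0) (by intro t; simp only [rr_even])]
    · rw [comb h1 h2 (Real.sqrt (1 - lpar η ^ 2)) 0 0]
      · ring
      · intro t ht; ring
    · intro t ht
      rw [rho_weight h1 h2 ht]; ring
  have e2 : ∫ s in η⁻¹..η, (s ^ 2 + (s⁻¹) ^ 2) / rho η α s =
      2 * (Real.sqrt (1 - lpar η ^ 2) * (P2 η α - 2 * Mm η α)) := by
    rw [cov h1 _ (f := fun t => Real.sqrt (1 - lpar η ^ 2) *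
        ((XX (lpar η) t ^ 2 - 2) * (rr η α t)⁻¹))
      (continuousOn_const.mul (((cX.pow 2).sub continuousOn_const).mul c0))
      (by intro t; simp only [rr_even, XX_even])]
    · rw [comb h1 h2 (-2 * Real.sqrt (1 - lpar η ^ 2)) 0 (Real.sqrt (1 - lpar η ^ 2))]
      · ring
      · intro t ht; ring
    · intro t ht
      have hw := rho_weight h1 h2 ht
      have hm : 0 < 1 - lpar η * t := by nlinarith [ht.1, ht.2]
      have hp : 0 < 1 + lpar η * t := by nlinarith [ht.1, ht.2]
      have hx : ((1 + lpar η * t) / (1 - lpar η * t)) ^ 2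
          + (((1 + lpar η * t) / (1 - lpar η * t))⁻¹) ^ 2 = XX (lpar η) t ^ 2 - 2 := by
        unfold XX
        have : 1 - lpar η ^ 2 * t ^ 2 = (1 - lpar η * t) * (1 + lpar η * t) := by ring
        rw [this]; field_simp; ring
      rw [hx]
      calc _ = (XX (lpar η) t ^ 2 - 2) * (2 * lpar η / (1 - lpar η * t) ^ 2 *
            (1 / rho η α ((1 + lpar η * t) / (1 - lpar η * t)))) := by ring
        _ = _ := by rw [hw]; ring
  have hM := Mm_pos h1 h2
  have hl2 : 0 < 1 - lpar η ^ 2 := by nlinarith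
  have hq : 0 < Real.sqrt (1 - lpar η ^ 2) := by positivity
  unfold Qfun
  rw [e1, e2]
  field_simp

lemma D_eq {η α : ℝ} (h1 : 1 < η) (h2 : η < α) : Dfun η α = M1 η α / Mm η α := by
  have hM := Mm_pos h1 h2
  have hα : 0 < α := by linarith
  have hα1 : 0 < α - 1 := by linarith
  have hc : 0 < Real.sqrt ((α - 1) ^ 2 / α) := by positivity
  unfold Dfun
  rw [ellK_eq h1 h2, ellPi_eq h1 h2, M1_eq h1 h2]
  generalize Real.sqrt ((α - 1) ^ 2 / α) = c at *
  generalize α⁻¹ = β at *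
  field_simp
  ring

lemma ND_eq {η α : ℝ} (h1 : 1 < η) (h2 : η < α) : Nfun η α / Dfun η α =
    (η + η⁻¹ - 3 * (α + α⁻¹)) / 2 + M3 η α / M1 η α := by
  have hM := Mm_pos h1 h2
  have hM1 := M1_pos h1 h2
  have hD := D_eq h1 h2
  have hD0 : Dfun η α ≠ 0 := by rw [hD]; positivity
  have hA : -α ^ 2 - (α⁻¹) ^ 2 = 2 - (α + α⁻¹) ^ 2 := by
    have : α ≠ 0 := by linarith
    field_simp; ring
  have hP1 : P1 η α = (α + α⁻¹) * Mm η α - M1 η α := by rw [M1_eq h1 h2]; ring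
  have hP2 : P2 η α = M3 η α - (α + α⁻¹) ^ 2 * Mm η α + 2 * (α + α⁻¹) * P1 η α := by
    rw [M3_eq h1 h2]; ring
  unfold Nfun
  rw [hA, Q_eq h1 h2, hP2, hP1, hD]
  generalize α⁻¹ = β at *
  generalize η⁻¹ = ζ at *
  field_simp
  ring

lemma rr_lt {η α β t : ℝ} (h1 : 1 < η) (h2 : η < α) (h3 : α < β) (ht : t ∈ Icc (-1 : ℝ) 1) :
    rr η α t < rr η β t := by
  apply Real.sqrt_lt_sqrt (AX_pos h1 h2 ht).le
  linarith [A_gt (h1.trans h2) h3]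

theorem stmt17 (η₁ η₂ : ℝ) (h1 : 1 < η₁) (h2 : η₁ < η₂) :
    (∀ α ∈ Set.Ioo η₁ η₂, 0 < Dfun η₁ α) ∧
    StrictMonoOn (Dfun η₁) (Set.Ioo η₁ η₂) ∧
    StrictAntiOn (fun α => Nfun η₁ α / Dfun η₁ α) (Set.Ioo η₁ η₂) := by
  have hl0 := lpar_pos h1
  have hl1 := lpar_lt h1
  have hlt1 : ∀ α β, η₁ < α → α < β → M1 η₁ α < M1 η₁ β := fun α β ha hab =>
    J_lt hl0 hl1 (rr_cont α h1) (rr_cont β h1) fun t ht => rr_lt h1 ha hab ht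
  refine ⟨?_, ?_, ?_⟩
  · intro α hα
    rw [D_eq h1 hα.1]
    exact div_pos (M1_pos h1 hα.1) (Mm_pos h1 hα.1)
  · intro α hα β hβ hab
    rw [D_eq h1 hα.1, D_eq h1 hβ.1]
    have e1 := hlt1 α β hα.1 hab
    have e2 : Mm η₁ β ≤ Mm η₁ α :=
      J_le hl0 hl1 (rri_cont h1 hβ.1) (rri_cont h1 hα.1) fun t ht =>
        inv_anti₀ (rr_pos h1 hα.1 ht) (rr_lt h1 hα.1 hab ht).le
    exact div_lt_div₀ e1 e2 (M1_pos h1 hβ.1).le (Mm_pos h1 hβ.1)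
  · intro α hα β hβ hab
    simp only []
    rw [ND_eq h1 hα.1, ND_eq h1 hβ.1]
    have e1 := hlt1 α β hα.1 hab
    set δ := β + β⁻¹ - (α + α⁻¹) with hδ
    have e3 : M3 η₁ β ≤ M3 η₁ α + 3 / 2 * δ * M1 η₁ β := by
      have i1 := J_int hl0 hl1 (f := fun t => rr η₁ α t ^ 3) ((rr_cont α h1).pow 3)
      have i2 := J_int hl0 hl1 (rr_cont β h1)
      have : M3 η₁ α + 3 / 2 * δ * M1 η₁ β = ∫ t in (0:ℝ)..1,
          (rr η₁ α t ^ 3 + 3 / 2 * δ * rr η₁ β t) * gg (lpar η₁) t := by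
        unfold M3 M1
        rw [← intervalIntegral.integral_const_mul,
          ← intervalIntegral.integral_add i1 (i2.const_mul _)]
        congr 1
        ext t
        ring
      rw [this]
      refine J_le hl0 hl1 ((rr_cont β h1).pow 3) (((rr_cont α h1).pow 3).add
        (continuousOn_const.mul (rr_cont β h1))) ?_
      intro t ht
      have s1 := rr_sq h1 hα.1 ht
      have s2 := rr_sq h1 hβ.1 ht
      have p1 := rr_pos h1 hα.1 ht
      have p2 := rr_lt h1 hα.1 hab ht
      have hd : δ = rr η₁ β t ^ 2 - rr η₁ α t ^ 2 := by rw [s1, s2, hδ]; ring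
      rw [hd]
      generalize rr η₁ α t = a at *
      generalize rr η₁ β t = c at *
      have : 0 ≤ (c - a) ^ 2 * (c + 2 * a) := by
        have : 0 < c := by linarith
        positivity
      nlinarith
    have p1 := M1_pos h1 hα.1
    have p2 := M1_pos h1 hβ.1
    have p3 := M3_pos h1 hα.1
    have e4 : M3 η₁ β / M1 η₁ β ≤ M3 η₁ α / M1 η₁ β + 3 / 2 * δ := by
      rw [div_le_iff₀ p2, add_mul, div_mul_cancel₀ _ p2.ne']
      exact e3
    have e5 : M3 η₁ α / M1 η₁ β < M3 η₁ α / M1 η₁ α := div_lt_div_of_pos_left p3 p1 e1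
    linarith
end

section
/- With the data below, the limit of N(α)/D(α) as α tends to η₁ from the right equals −(η₁ − η₁⁻¹)/ln η₁. -/
open Set Filter Topology MeasureTheory

/-- The kernel of the elliptic integrals. -/
noncomputable def kern (k t : ℝ) : ℝ := 1 / Real.sqrt ((1 - t ^ 2) * (1 - k ^ 2 * t ^ 2))

lemma aux_pos {k t : ℝ} (hk0 : 0 < k) (hk1 : k < 1) (ht : t ∈ Icc (-1 : ℝ) 1) :
    0 ≤ 1 - t ^ 2 ∧ 0 < 1 - k ^ 2 * t ^ 2 ∧ 1 - k ^ 2 ≤ 1 - k ^ 2 * t ^ 2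
      ∧ 1 - t ^ 2 ≤ 1 - k ^ 2 * t ^ 2 := by
  obtain ⟨h1, h2⟩ := ht
  have ht2 : t ^ 2 ≤ 1 := by nlinarith
  have hk2 : k ^ 2 < 1 := by nlinarith
  have hk3 : 0 < k ^ 2 := by positivity
  have ht0 := sq_nonneg t
  refine ⟨by linarith, by nlinarith, by nlinarith, by nlinarith⟩

lemma kern_eq {k t : ℝ} (ht : t ∈ Icc (-1 : ℝ) 1) :
    kern k t = 1 / Real.sqrt (1 - t ^ 2) * (1 / Real.sqrt (1 - k ^ 2 * t ^ 2)) := by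
  obtain ⟨h1, h2⟩ := ht
  have : 0 ≤ 1 - t ^ 2 := by nlinarith
  rw [kern, Real.sqrt_mul this]
  ring

lemma arcsin_int : IntervalIntegrable (fun t : ℝ => 1 / Real.sqrt (1 - t ^ 2)) volume (-1) 1 := by
  apply intervalIntegral.intervalIntegrable_deriv_of_nonneg (g := Real.arcsin)
  · exact Real.continuous_arcsin.continuousOn
  · intro x hx
    norm_num at hx
    exact Real.hasDerivAt_arcsin (by linarith) (by linarith)
  · intro x _
    positivity

lemma kern_int {k : ℝ} (hk0 : 0 < k) (hk1 : k < 1) :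
    IntervalIntegrable (kern k) volume (-1) 1 := by
  have h := arcsin_int.mul_continuousOn (g := fun t => 1 / Real.sqrt (1 - k ^ 2 * t ^ 2)) (by
    rw [uIcc_of_le (by norm_num)]
    refine ContinuousOn.div continuousOn_const (by fun_prop) ?_
    intro t ht
    exact (Real.sqrt_pos.2 (aux_pos hk0 hk1 ht).2.1).ne')
  refine h.congr ?_
  intro t ht
  rw [uIoc_of_le (by norm_num)] at ht
  exact (kern_eq ⟨ht.1.le, ht.2⟩).symm

lemma kern_int01 {k : ℝ} (hk0 : 0 < k) (hk1 : k < 1) :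
    IntervalIntegrable (kern k) volume 0 1 :=
  (kern_int hk0 hk1).mono_set (by
    rw [uIcc_of_le (by norm_num), uIcc_of_le (by norm_num)]
    exact Icc_subset_Icc (by norm_num) le_rfl)

lemma ellK_eq_s18 (k : ℝ) : ellK k = ∫ t in (0 : ℝ)..1, kern k t := rfl

lemma one_le_ellK {k : ℝ} (hk0 : 0 < k) (hk1 : k < 1) : 1 ≤ ellK k := by
  have : ∫ t in (0 : ℝ)..1, (1 : ℝ) ≤ ∫ t in (0 : ℝ)..1, kern k t := by
    apply intervalIntegral.integral_mono_on_of_le_Ioo (by norm_num) (by simp) (kern_int01 hk0 hk1)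
    intro t ht
    obtain ⟨h1, h2, h3, h4⟩ := aux_pos hk0 hk1 (t := t) ⟨by linarith [ht.1], ht.2.le⟩
    have h5 : 0 < 1 - t ^ 2 := by nlinarith [ht.1, ht.2]
    rw [kern, le_div_iff₀ (Real.sqrt_pos.2 (by positivity)), one_mul, Real.sqrt_le_one]
    have : 1 - k ^ 2 * t ^ 2 ≤ 1 := by nlinarith [mul_nonneg (sq_nonneg k) (sq_nonneg t)]
    nlinarith [sq_nonneg t]
  rw [ellK_eq_s18]
  simpa using this

lemma ellK_le {k : ℝ} (hk0 : 0 < k) (hk1 : k < 1) :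
    (1 - k) * ellK k ≤
      Real.sqrt (1 - k ^ 2) * ∫ t in (0 : ℝ)..1, 1 / Real.sqrt (1 - t ^ 2) := by
  have hA : IntervalIntegrable (fun t : ℝ => 1 / Real.sqrt (1 - t ^ 2)) volume 0 1 :=
    arcsin_int.mono_set (by
      rw [uIcc_of_le (by norm_num), uIcc_of_le (by norm_num)]
      exact Icc_subset_Icc (by norm_num) le_rfl)
  rw [ellK_eq_s18, ← intervalIntegral.integral_const_mul, ← intervalIntegral.integral_const_mul]
  apply intervalIntegral.integral_mono_on (by norm_num) ((kern_int01 hk0 hk1).const_mul _)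
    (hA.const_mul _)
  intro t ht
  have ht' : t ∈ Icc (-1 : ℝ) 1 := ⟨by linarith [ht.1], ht.2⟩
  obtain ⟨h1, h2, h3, h4⟩ := aux_pos hk0 hk1 ht'
  rw [kern_eq ht']
  have hk2 : 0 < 1 - k ^ 2 := by nlinarith
  have e : (1 - k) * (1 / Real.sqrt (1 - k ^ 2 * t ^ 2)) ≤ Real.sqrt (1 - k ^ 2) := by
    rw [mul_one_div, div_le_iff₀ (Real.sqrt_pos.2 h2)]
    calc 1 - k ≤ 1 - k ^ 2 := by nlinarith
      _ = Real.sqrt (1 - k ^ 2) * Real.sqrt (1 - k ^ 2) := (Real.mul_self_sqrt hk2.le).symm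
      _ ≤ _ := by gcongr
  have : 0 ≤ 1 / Real.sqrt (1 - t ^ 2) := by positivity
  nlinarith

lemma ellK_lim : Tendsto (fun k => (1 - k) * ellK k) (𝓝[Ioo 0 1] 1) (𝓝 0) := by
  have hev : ∀ᶠ k in 𝓝[Ioo (0:ℝ) 1] 1, k ∈ Ioo (0 : ℝ) 1 := self_mem_nhdsWithin
  have hc : Tendsto (fun k : ℝ => Real.sqrt (1 - k ^ 2) *
      ∫ t in (0 : ℝ)..1, 1 / Real.sqrt (1 - t ^ 2)) (𝓝[Ioo 0 1] 1) (𝓝 0) := by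
    have : Continuous (fun k : ℝ => Real.sqrt (1 - k ^ 2) *
      ∫ t in (0 : ℝ)..1, 1 / Real.sqrt (1 - t ^ 2)) := by fun_prop
    have := (this.tendsto 1).mono_left (nhdsWithin_le_nhds (s := Ioo 0 1))
    simpa using this
  refine tendsto_of_tendsto_of_tendsto_of_le_of_le' tendsto_const_nhds hc ?_ ?_
  · filter_upwards [hev] with k hk
    have := one_le_ellK hk.1 hk.2
    have := hk.2
    apply mul_nonneg <;> linarith
  · filter_upwards [hev] with k hk
    exact ellK_le hk.1 hk.2

lemma H_lim {H : ℝ → ℝ} (hH : ContinuousOn H (Icc 0 1)) :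
    Tendsto (fun k => ∫ t in (0 : ℝ)..1,
        H t * (Real.sqrt (1 - t ^ 2) / Real.sqrt (1 - k ^ 2 * t ^ 2)))
      (𝓝[Ioo 0 1] 1) (𝓝 (∫ t in (0 : ℝ)..1, H t)) := by
  have hev : ∀ᶠ k in 𝓝[Ioo (0:ℝ) 1] 1, k ∈ Ioo (0 : ℝ) 1 := self_mem_nhdsWithin
  apply intervalIntegral.tendsto_integral_filter_of_dominated_convergence (fun t => |H t|)
  · filter_upwards [hev] with k hk
    rw [uIoc_of_le (by norm_num)]
    apply ContinuousOn.aestronglyMeasurable _ measurableSet_Ioc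
    refine (hH.mono Ioc_subset_Icc_self).mul ?_
    refine ContinuousOn.div (by fun_prop) (by fun_prop) ?_
    intro t ht
    exact (Real.sqrt_pos.2 (aux_pos hk.1 hk.2 ⟨by linarith [ht.1], ht.2⟩).2.1).ne'
  · filter_upwards [hev] with k hk
    refine Eventually.of_forall fun t ht => ?_
    rw [uIoc_of_le (by norm_num)] at ht
    obtain ⟨h1, h2, h3, h4⟩ := aux_pos hk.1 hk.2 (t := t) ⟨by linarith [ht.1], ht.2⟩
    rw [norm_mul, Real.norm_eq_abs]
    apply mul_le_of_le_one_right (abs_nonneg _)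
    rw [Real.norm_eq_abs, abs_of_nonneg (by positivity), div_le_one (Real.sqrt_pos.2 h2)]
    exact Real.sqrt_le_sqrt h4
  · apply ContinuousOn.intervalIntegrable
    rw [uIcc_of_le (by norm_num)]
    exact hH.abs
  · have : ∀ᵐ t : ℝ, t ≠ 1 := by simp [ae_iff]
    filter_upwards [this] with t ht1 ht
    rw [uIoc_of_le (by norm_num)] at ht
    have ht2 : 0 < 1 - t ^ 2 := by
      have := lt_of_le_of_ne ht.2 ht1
      nlinarith [ht.1]
    have hs := (Real.sqrt_pos.2 ht2).ne'
    have hc : ContinuousAt (fun k : ℝ =>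
        H t * (Real.sqrt (1 - t ^ 2) / Real.sqrt (1 - k ^ 2 * t ^ 2))) 1 := by
      refine continuousAt_const.mul (continuousAt_const.div (by fun_prop) ?_)
      simpa using hs
    have := hc.tendsto.mono_left (nhdsWithin_le_nhds (s := Ioo 0 1))
    simpa [div_self hs] using this

lemma decomp {k : ℝ} (hk0 : 0 < k) (hk1 : k < 1) {G H : ℝ → ℝ} {g : ℝ}
    (hH : ContinuousOn H (Icc 0 1))
    (hG : ∀ t ∈ Icc (0 : ℝ) 1, G t = g + (1 - t ^ 2) * H t) :
    ∫ t in (0 : ℝ)..1, G t * kern k t = g * ellK k + ∫ t in (0 : ℝ)..1,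
        H t * (Real.sqrt (1 - t ^ 2) / Real.sqrt (1 - k ^ 2 * t ^ 2)) := by
  rw [ellK_eq_s18, ← intervalIntegral.integral_const_mul, ← intervalIntegral.integral_add]
  · apply intervalIntegral.integral_congr
    intro t ht
    rw [uIcc_of_le (by norm_num)] at ht
    have ht' : t ∈ Icc (-1 : ℝ) 1 := ⟨by linarith [ht.1], ht.2⟩
    simp only
    rw [hG t ht, kern_eq ht']
    have : Real.sqrt (1 - t ^ 2) = (1 - t ^ 2) / Real.sqrt (1 - t ^ 2) := Real.div_sqrt.symm
    nth_rw 3 [this]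
    ring
  · exact (kern_int01 hk0 hk1).const_mul _
  · apply ContinuousOn.intervalIntegrable
    rw [uIcc_of_le (by norm_num)]
    refine hH.mul ?_
    refine ContinuousOn.div (by fun_prop) (by fun_prop) ?_
    intro t ht
    exact (Real.sqrt_pos.2 (aux_pos hk0 hk1 ⟨by linarith [ht.1], ht.2⟩).2.1).ne'

lemma even_int {f : ℝ → ℝ} (hf : IntervalIntegrable f volume (-1) 1)
    (he : ∀ t, f (-t) = f t) : ∫ t in (-1 : ℝ)..1, f t = 2 * ∫ t in (0 : ℝ)..1, f t := by
  have i1 : IntervalIntegrable f volume (-1) 0 := hf.mono_set (by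
    rw [uIcc_of_le (by norm_num), uIcc_of_le (by norm_num)]
    exact Icc_subset_Icc le_rfl (by norm_num))
  have i2 : IntervalIntegrable f volume 0 1 := hf.mono_set (by
    rw [uIcc_of_le (by norm_num), uIcc_of_le (by norm_num)]
    exact Icc_subset_Icc (by norm_num) le_rfl)
  rw [← intervalIntegral.integral_add_adjacent_intervals i1 i2]
  have := intervalIntegral.integral_comp_neg (a := 0) (b := 1) f
  simp only [he, neg_zero] at this
  rw [← this]
  ring

lemma lpar_bd {x : ℝ} (hx : 1 < x) : 0 < lpar x ∧ lpar x < 1 ∧ x = (1 + lpar x) / (1 - lpar x) := by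
  have h0 : 0 < x + 1 := by linarith
  have h1 : lpar x < 1 := by
    rw [lpar, div_lt_one h0]; linarith
  refine ⟨div_pos (by linarith) h0, h1, ?_⟩
  rw [eq_div_iff (by linarith), lpar]
  field_simp
  ring

lemma lpar_lt_s18 {x y : ℝ} (hx : 1 < x) (hxy : x < y) : lpar x < lpar y := by
  rw [lpar, lpar, div_lt_div_iff₀ (by linarith) (by linarith)]
  nlinarith

lemma rho_eq {l L t : ℝ} (hl0 : 0 < l) (hl1 : l < 1) (hL0 : 0 < L) (hL1 : L < 1)
    (ht : t ∈ Ioo (-1 : ℝ) 1) :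
    rho ((1 + l) / (1 - l)) ((1 + L) / (1 - L)) ((1 + l * t) / (1 - l * t)) =
      4 * l * L / Real.sqrt ((1 - l ^ 2) * (1 - L ^ 2)) / (1 - l * t) ^ 2 *
        Real.sqrt ((1 - t ^ 2) * (1 - (l / L) ^ 2 * t ^ 2)) := by
  have hu : 0 < 1 - l * t := by nlinarith [ht.1, ht.2]
  have a1 : 0 < 1 - l := by linarith
  have a2 : 0 < 1 - L := by linarith
  have a3 : 0 < 1 + l := by linarith
  have a4 : 0 < 1 + L := by linarith
  have b1 : 0 < 1 - l ^ 2 := by nlinarith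
  have b2 : 0 < 1 - L ^ 2 := by nlinarith
  have hA : 0 ≤ 4 * l * L / Real.sqrt ((1 - l ^ 2) * (1 - L ^ 2)) / (1 - l * t) ^ 2 := by positivity
  rw [← Real.sqrt_sq hA, ← Real.sqrt_mul (sq_nonneg _), rho]
  congr 1
  rw [div_pow, div_pow, Real.sq_sqrt (by positivity)]
  have e1 : 1 - l ^ 2 = (1 - l) * (1 + l) := by ring
  have e2 : 1 - L ^ 2 = (1 - L) * (1 + L) := by ring
  rw [e1, e2, inv_div, inv_div]
  field_simp
  ring

lemma rho_subst {η α : ℝ} (h1 : 1 < η) (hα : η < α) : ∃ c : ℝ, c ≠ 0 ∧ ∀ F : ℝ → ℝ,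
    ∫ s in η⁻¹..η, F s / rho η α s = c * ∫ t in (-1 : ℝ)..1,
      F ((1 + lpar η * t) / (1 - lpar η * t)) * kern (kfun η α) t := by
  obtain ⟨hl0, hl1, hη⟩ := lpar_bd h1
  obtain ⟨hL0, hL1, hα'⟩ := lpar_bd (h1.trans hα)
  rw [kfun]
  set l := lpar η with hl
  set L := lpar α with hL
  clear_value l L
  have b1 : 0 < 1 - l ^ 2 := by nlinarith
  have b2 : 0 < 1 - L ^ 2 := by nlinarith
  have a1 : 0 < 1 - l := by linarith
  set A := 4 * l * L / Real.sqrt ((1 - l ^ 2) * (1 - L ^ 2)) with hA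
  have hApos : 0 < A := by positivity
  have hu : ∀ t ∈ Ioo (-1 : ℝ) 1, 0 < 1 - l * t := fun t ht => by nlinarith [ht.1, ht.2]
  have hu' : ∀ t ∈ Ioo (-1 : ℝ) 1, 0 < 1 + l * t := fun t ht => by nlinarith [ht.1, ht.2]
  refine ⟨2 * l / A, by positivity, fun F => ?_⟩
  have himg : (fun t => (1 + l * t) / (1 - l * t)) '' Ioo (-1 : ℝ) 1 = Ioo η⁻¹ η := by
    ext s
    constructor
    · rintro ⟨t, ht, rfl⟩
      have := hu t ht
      simp only [mem_Ioo]
      rw [hη, inv_div, div_lt_div_iff₀ (by linarith) (by linarith),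
        div_lt_div_iff₀ (by linarith) (by linarith)]
      constructor <;> nlinarith [ht.1, ht.2]
    · rintro ⟨hs1, hs2⟩
      rw [hη, lt_div_iff₀ a1] at hs2
      rw [hη, inv_div, div_lt_iff₀ (by linarith)] at hs1
      have hs : 0 < s + 1 := by nlinarith
      refine ⟨(s - 1) / (l * (s + 1)), ⟨?_, ?_⟩, ?_⟩
      · rw [lt_div_iff₀ (by positivity)]; linarith
      · rw [div_lt_iff₀ (by positivity)]; linarith
      · have e : l * ((s - 1) / (l * (s + 1))) = (s - 1) / (s + 1) := by field_simp
        simp only [e]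
        field_simp
        ring
  have hle : η⁻¹ ≤ η := (inv_le_one_of_one_le₀ h1.le).trans h1.le
  rw [intervalIntegral.integral_of_le hle, integral_Ioc_eq_integral_Ioo, ← himg,
    integral_image_eq_integral_abs_deriv_smul (f' := fun t => 2 * l / (1 - l * t) ^ 2)
      measurableSet_Ioo]
  · rw [intervalIntegral.integral_of_le (by norm_num), integral_Ioc_eq_integral_Ioo,
      ← integral_const_mul]
    apply setIntegral_congr_fun measurableSet_Ioo
    intro t ht
    have h0 := hu t ht
    simp only [smul_eq_mul]
    rw [hα', hη, rho_eq hl0 hl1 hL0 hL1 ht, ← hA, abs_of_nonneg (by positivity), kern]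
    generalize Real.sqrt ((1 - t ^ 2) * (1 - (l / L) ^ 2 * t ^ 2)) = R
    rcases eq_or_ne R 0 with rfl | hR
    · simp
    · field_simp
  · intro t ht
    have h0 := hu t ht
    have d1 : HasDerivAt (fun t : ℝ => 1 + l * t) l t := by
      simpa using ((hasDerivAt_id t).const_mul l).const_add 1
    have d2 : HasDerivAt (fun t : ℝ => 1 - l * t) (-l) t := by
      simpa using ((hasDerivAt_id t).const_mul l).const_sub 1
    have := d1.fun_div d2 h0.ne'
    refine (this.congr_deriv ?_).hasDerivWithinAt
    congr 1
    ring
  · intro t ht t' ht' h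
    have h0 := hu t ht
    have h0' := hu t' ht'
    simp only at h
    rw [div_eq_div_iff h0.ne' h0'.ne'] at h
    have : l * (t - t') = 0 := by linarith
    rcases mul_eq_zero.1 this with h | h <;> linarith

/-- building block of the quotient functions. -/
noncomputable def HH (l a b t : ℝ) : ℝ := a * (1 / (1 - l ^ 2 * t ^ 2)) + b * (1 / (1 - l ^ 2 * t ^ 2)) ^ 2

lemma HH_cont {l : ℝ} (hl0 : 0 < l) (hl1 : l < 1) (a b : ℝ) : ContinuousOn (HH l a b) (Icc (-1) 1) := by
  have : ContinuousOn (fun t : ℝ => 1 / (1 - l ^ 2 * t ^ 2)) (Icc (-1) 1) := by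
    refine ContinuousOn.div (by fun_prop) (by fun_prop) ?_
    intro t ht
    exact (aux_pos hl0 hl1 ht).2.1.ne'
  exact (this.const_mul a).add ((this.pow 2).const_mul b)

lemma HH_int {l : ℝ} (hl0 : 0 < l) (hl1 : l < 1) (a b : ℝ) :
    ∫ t in (0 : ℝ)..1, HH l a b t = a * (Real.log ((1 + l) / (1 - l)) / (2 * l)) +
      b * (1 / (2 * (1 - l ^ 2)) + Real.log ((1 + l) / (1 - l)) / (2 * l) / 2) := by
  have hc : IntervalIntegrable (HH l a b) volume 0 1 := by
    apply ContinuousOn.intervalIntegrable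
    rw [uIcc_of_le (by norm_num)]
    exact (HH_cont hl0 hl1 a b).mono (Icc_subset_Icc (by norm_num) le_rfl)
  rw [intervalIntegral.integral_eq_sub_of_hasDerivAt (f := fun t =>
    (a + b / 2) * ((Real.log (1 + l * t) - Real.log (1 - l * t)) / (2 * l)) +
      b * (t / (2 * (1 - l ^ 2 * t ^ 2)))) _ hc]
  · rw [Real.log_div (by linarith) (by linarith)]
    simp
    ring
  · intro t ht
    rw [uIcc_of_le (by norm_num)] at ht
    have h0 : 0 < 1 - l * t := by nlinarith [ht.1, ht.2]
    have h0' : 0 < 1 + l * t := by nlinarith [ht.1, ht.2]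
    have h2 : 1 - l ^ 2 * t ^ 2 = (1 - l * t) * (1 + l * t) := by ring
    have d1 : HasDerivAt (fun t : ℝ => 1 + l * t) l t := by
      simpa using ((hasDerivAt_id t).const_mul l).const_add 1
    have d2 : HasDerivAt (fun t : ℝ => 1 - l * t) (-l) t := by
      simpa using ((hasDerivAt_id t).const_mul l).const_sub 1
    have d3 : HasDerivAt (fun t : ℝ => 2 * (1 - l ^ 2 * t ^ 2)) (2 * (-(l ^ 2 * (2 * t)))) t := by
      have := (((hasDerivAt_pow 2 t).const_mul (l ^ 2)).const_sub 1).const_mul 2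
      simpa using this
    have d4 := (hasDerivAt_id t).fun_div d3 (by rw [h2]; positivity)
    have := ((((d1.log h0'.ne').sub (d2.log h0.ne')).div_const (2 * l)).const_mul (a + b / 2)).add
      (d4.const_mul b)
    refine this.congr_deriv ?_
    rw [HH]
    simp only [id]
    rw [h2]
    field_simp
    ring

/-- The regular part of the elliptic-type integrals. -/
noncomputable def RI (l a b k : ℝ) : ℝ := ∫ t in (0 : ℝ)..1,
  HH l a b t * (Real.sqrt (1 - t ^ 2) / Real.sqrt (1 - k ^ 2 * t ^ 2))

lemma ellPi_eq_s18 {l k : ℝ} (hl0 : 0 < l) (hl1 : l < 1) (hk0 : 0 < k) (hk1 : k < 1) :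
    ellPi (l ^ 2) k = 1 / (1 - l ^ 2) * ellK k + RI l (-l ^ 2 / (1 - l ^ 2)) 0 k := by
  have hb : 1 - l ^ 2 ≠ 0 := by nlinarith
  have := decomp hk0 hk1 (G := fun t => 1 / (1 - l ^ 2 * t ^ 2))
    (H := HH l (-l ^ 2 / (1 - l ^ 2)) 0) (g := 1 / (1 - l ^ 2))
    ((HH_cont hl0 hl1 _ _).mono (Icc_subset_Icc (by norm_num) le_rfl)) (by
      intro t ht
      have h0 := (aux_pos hl0 hl1 (t := t) ⟨by linarith [ht.1], ht.2⟩).2.1.ne'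
      simp only [HH]
      field_simp
      ring)
  rw [RI, ← this, ellPi]
  congr 1
  funext t
  rw [kern]
  generalize Real.sqrt ((1 - t ^ 2) * (1 - k ^ 2 * t ^ 2)) = R
  generalize 1 - l ^ 2 * t ^ 2 = S
  rw [one_div_mul_one_div]

lemma Q_eq_s18 {η α : ℝ} (h1 : 1 < η) (hα : η < α) :
    Qfun η α * ellK (kfun η α) = (η ^ 2 + (η⁻¹) ^ 2) * ellK (kfun η α) +
      RI (lpar η) (-4 * lpar η ^ 2 / (1 - lpar η ^ 2) * (4 / (1 - lpar η ^ 2) - 4))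
        (-16 * lpar η ^ 2 / (1 - lpar η ^ 2)) (kfun η α) := by
  obtain ⟨c, hc, hF⟩ := rho_subst h1 hα
  obtain ⟨hl0, hl1, hη⟩ := lpar_bd h1
  have hL := lpar_lt_s18 h1 hα
  have hk0 : 0 < kfun η α := div_pos hl0 (hl0.trans hL)
  have hk1 : kfun η α < 1 := (div_lt_one (hl0.trans hL)).2 hL
  have hK := one_le_ellK hk0 hk1
  have hN := hF (fun s => s ^ 2 + (s⁻¹) ^ 2)
  have hD := hF (fun s => 1)
  rw [Qfun, hN, hD]
  generalize kfun η α = k at *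
  set l := lpar η with hl
  clear_value l
  have e1 : ∫ t in (-1 : ℝ)..1, (1 : ℝ) * kern k t = 2 * ellK k := by
    rw [ellK_eq_s18, ← even_int (kern_int hk0 hk1)]
    · simp
    · intro t; simp [kern]
  have hb : 1 - l ^ 2 ≠ 0 := by nlinarith
  have hG : ∀ t ∈ Icc (-1 : ℝ) 1, ((1 + l * t) / (1 - l * t)) ^ 2 + (((1 + l * t) / (1 - l * t))⁻¹) ^ 2
      = (4 * (1 / (1 - l ^ 2 * t ^ 2)) - 2) ^ 2 - 2 := by
    intro t ht
    have h0 : 0 < 1 - l * t := by nlinarith [ht.1, ht.2]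
    have h0' : 0 < 1 + l * t := by nlinarith [ht.1, ht.2]
    have h2 : 1 - l ^ 2 * t ^ 2 = (1 - l * t) * (1 + l * t) := by ring
    rw [h2]
    field_simp
    ring
  have hη2 : η ^ 2 + (η⁻¹) ^ 2 = (4 * (1 / (1 - l ^ 2)) - 2) ^ 2 - 2 := by
    have := hG 1 (by norm_num)
    simpa [← hη] using this
  have e2 : ∫ t in (-1 : ℝ)..1, (((1 + l * t) / (1 - l * t)) ^ 2 + (((1 + l * t) / (1 - l * t))⁻¹) ^ 2)
        * kern k t = 2 * ∫ t in (0 : ℝ)..1, ((4 * (1 / (1 - l ^ 2 * t ^ 2)) - 2) ^ 2 - 2) * kern k t := by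
    rw [← even_int]
    · apply intervalIntegral.integral_congr
      intro t ht
      rw [uIcc_of_le (by norm_num)] at ht
      simp only
      rw [hG t ht]
    · apply (kern_int hk0 hk1).continuousOn_mul
      rw [uIcc_of_le (by norm_num)]
      have : ContinuousOn (fun t : ℝ => 1 / (1 - l ^ 2 * t ^ 2)) (Icc (-1) 1) := by
        refine ContinuousOn.div (by fun_prop) (by fun_prop) ?_
        intro t ht
        exact (aux_pos hl0 hl1 ht).2.1.ne'
      fun_prop
    · intro t; simp [kern]
  have e3 := decomp hk0 hk1 (G := fun t => (4 * (1 / (1 - l ^ 2 * t ^ 2)) - 2) ^ 2 - 2)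
    (H := HH l (-4 * l ^ 2 / (1 - l ^ 2) * (4 / (1 - l ^ 2) - 4)) (-16 * l ^ 2 / (1 - l ^ 2)))
    (g := (4 * (1 / (1 - l ^ 2)) - 2) ^ 2 - 2)
    ((HH_cont hl0 hl1 _ _).mono (Icc_subset_Icc (by norm_num) le_rfl)) (by
      intro t ht
      have h0 := (aux_pos hl0 hl1 (t := t) ⟨by linarith [ht.1], ht.2⟩).2.1.ne'
      simp only [HH]
      field_simp
      ring)
  rw [RI, hη2, ← e3, e1, e2]
  have : ellK k ≠ 0 := by linarith
  field_simp

lemma sum_inv {x : ℝ} (hx : 1 < x) : x + x⁻¹ = 4 / (1 - lpar x ^ 2) - 2 := by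
  obtain ⟨hl0, hl1, hη⟩ := lpar_bd hx
  set l := lpar x
  clear_value l
  have e1 : 1 - l ^ 2 = (1 - l) * (1 + l) := by ring
  have a1 : 0 < 1 - l := by linarith
  have a2 : 0 < 1 + l := by linarith
  rw [hη, inv_div, e1]
  field_simp
  ring

theorem stmt18 (η₁ η₂ : ℝ) (h1 : 1 < η₁) (h2 : η₁ < η₂) :
    Filter.Tendsto (fun α => Nfun η₁ α / Dfun η₁ α)
      (nhdsWithin η₁ (Set.Ioi η₁))
      (nhds (-(η₁ - η₁⁻¹) / Real.log η₁)) := by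
  obtain ⟨hl0, hl1, hη⟩ := lpar_bd h1
  have hev : ∀ᶠ α in 𝓝[>] η₁, η₁ < α := self_mem_nhdsWithin
  have hη0 : η₁ ≠ 0 := by linarith
  have hkm : ∀ α, η₁ < α → kfun η₁ α ∈ Ioo (0 : ℝ) 1 := fun α hα => by
    have hL := lpar_lt_s18 h1 hα
    exact ⟨div_pos hl0 (hl0.trans hL), (div_lt_one (hl0.trans hL)).2 hL⟩
  have hlc : ContinuousAt lpar η₁ := by
    unfold lpar
    exact ContinuousAt.div (by fun_prop) (by fun_prop) (by linarith)
  have hl : Tendsto lpar (𝓝[>] η₁) (𝓝 (lpar η₁)) := hlc.tendsto.mono_left nhdsWithin_le_nhds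
  have hk : Tendsto (kfun η₁) (𝓝[>] η₁) (𝓝[Ioo 0 1] 1) := by
    apply tendsto_nhdsWithin_of_tendsto_nhds_of_eventually_within
    · have := (tendsto_const_nhds (x := lpar η₁)).div hl hl0.ne'
      rwa [div_self hl0.ne'] at this
    · filter_upwards [hev] with α hα
      exact hkm α hα
  have hI : ∀ a b, Tendsto (fun α => RI (lpar η₁) a b (kfun η₁ α)) (𝓝[>] η₁)
      (𝓝 (∫ t in (0 : ℝ)..1, HH (lpar η₁) a b t)) := fun a b =>
    (H_lim ((HH_cont hl0 hl1 a b).mono (Icc_subset_Icc (by norm_num) le_rfl))).comp hk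
  have hb : 0 < 1 - lpar η₁ ^ 2 := by nlinarith
  -- the vanishing term
  have hP : Tendsto (fun α => (α + α⁻¹ - η₁ - η₁⁻¹) * ellK (kfun η₁ α)) (𝓝[>] η₁) (𝓝 0) := by
    have hr : Tendsto (fun α => 4 * lpar α * (lpar α + lpar η₁) /
        ((1 - lpar α ^ 2) * (1 - lpar η₁ ^ 2))) (𝓝[>] η₁)
        (𝓝 (4 * lpar η₁ * (lpar η₁ + lpar η₁) / ((1 - lpar η₁ ^ 2) * (1 - lpar η₁ ^ 2)))) :=
      ((hl.const_mul 4).mul (hl.add_const _)).div (((hl.pow 2).const_sub 1).mul_const _)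
        (by positivity)
    have := hr.mul (ellK_lim.comp hk)
    rw [mul_zero] at this
    refine this.congr' ?_
    filter_upwards [hev] with α hα
    have hα1 := h1.trans hα
    obtain ⟨hL0, hL1, -⟩ := lpar_bd hα1
    have hB : 0 < 1 - lpar α ^ 2 := by nlinarith
    have e : α + α⁻¹ - η₁ - η₁⁻¹ = (4 / (1 - lpar α ^ 2) - 2) - (4 / (1 - lpar η₁ ^ 2) - 2) := by
      rw [← sum_inv h1, ← sum_inv hα1]; ring
    simp only [Function.comp]
    rw [e, ← mul_assoc]
    congr 1
    rw [kfun]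
    field_simp
    ring
  have hS : Tendsto (fun α : ℝ => α + α⁻¹ + η₁ + η₁⁻¹) (𝓝[>] η₁) (𝓝 (η₁ + η₁⁻¹ + η₁ + η₁⁻¹)) := by
    have : ContinuousAt (fun α : ℝ => α + α⁻¹ + η₁ + η₁⁻¹) η₁ := by fun_prop (disch := assumption)
    exact this.tendsto.mono_left nhdsWithin_le_nhds
  have hDK : ∀ α, η₁ < α → Dfun η₁ α * ellK (kfun η₁ α) =
      (α + α⁻¹ - η₁ - η₁⁻¹) * ellK (kfun η₁ α) -
        4 * RI (lpar η₁) (-lpar η₁ ^ 2 / (1 - lpar η₁ ^ 2)) 0 (kfun η₁ α) := by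
    intro α hα
    obtain ⟨hk0, hk1⟩ := hkm α hα
    have hK := one_le_ellK hk0 hk1
    have hK0 : ellK (kfun η₁ α) ≠ 0 := by linarith
    have e := sum_inv h1
    have e' : 4 * (1 / (1 - lpar η₁ ^ 2)) = η₁ + η₁⁻¹ + 2 := by rw [e]; ring
    rw [Dfun, sub_mul, div_mul_cancel₀ _ hK0, ellPi_eq_s18 hl0 hl1 hk0 hk1, mul_add, ← mul_assoc, e']
    ring
  have hD := (hP.sub ((hI (-lpar η₁ ^ 2 / (1 - lpar η₁ ^ 2)) 0).const_mul 4)).congr' (by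
    filter_upwards [hev] with α hα
    exact (hDK α hα).symm)
  have hN : Tendsto (fun α => Nfun η₁ α * ellK (kfun η₁ α)) (𝓝[>] η₁) _ :=
    (((hP.mul hS).neg.add ((hS.div_const 2).mul hD)).add
    (hI (-4 * lpar η₁ ^ 2 / (1 - lpar η₁ ^ 2) * (4 / (1 - lpar η₁ ^ 2) - 4))
        (-16 * lpar η₁ ^ 2 / (1 - lpar η₁ ^ 2)))).congr' (by
    filter_upwards [hev] with α hα
    have hq := Q_eq_s18 h1 hα
    have hα0 : α ≠ 0 := by linarith
    have e1 : α * α⁻¹ = 1 := mul_inv_cancel₀ hα0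
    have e2 : η₁ * η₁⁻¹ = 1 := mul_inv_cancel₀ hη0
    rw [Nfun, add_mul, hq]
    linear_combination 2 * ellK (kfun η₁ α) * (e2 - e1))
  have hlog : 0 < Real.log η₁ := Real.log_pos h1
  rw [HH_int hl0 hl1, ← hη] at hD
  rw [HH_int hl0 hl1, HH_int hl0 hl1, ← hη] at hN
  have hfin := hN.div hD (by
    have : 0 < lpar η₁ ^ 2 / (1 - lpar η₁ ^ 2) * (Real.log η₁ / (2 * lpar η₁)) := by positivity
    rw [neg_div]
    linarith)
  have hc : η₁ - η₁⁻¹ = 4 * lpar η₁ / (1 - lpar η₁ ^ 2) := by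
    have e1 : 1 - lpar η₁ ^ 2 = (1 - lpar η₁) * (1 + lpar η₁) := by ring
    have a1 : 0 < 1 - lpar η₁ := by linarith
    have a2 : 0 < 1 + lpar η₁ := by linarith
    rw [e1]
    generalize lpar η₁ = l at *
    rw [hη, inv_div]
    field_simp
    ring
  have hs := sum_inv h1
  have hs' : η₁ + η₁⁻¹ + η₁ + η₁⁻¹ = 2 * (4 / (1 - lpar η₁ ^ 2) - 2) := by rw [← hs]; ring
  rw [hs'] at hfin
  rw [hc]
  have hval : ∀ x y : ℝ, x = y → Tendsto (fun α => Nfun η₁ α / Dfun η₁ α) (𝓝[>] η₁) (𝓝 x) →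
    Tendsto (fun α => Nfun η₁ α / Dfun η₁ α) (𝓝[>] η₁) (𝓝 y) := by
    rintro x y rfl h; exact h
  refine hval _ _ ?_ (hfin.congr' ?_)
  · generalize Real.log η₁ = w at *
    generalize lpar η₁ = l at *
    field_simp
    ring
  · filter_upwards [hev] with α hα
    obtain ⟨hk0, hk1⟩ := hkm α hα
    have hK := one_le_ellK hk0 hk1
    have hK0 : ellK (kfun η₁ α) ≠ 0 := by linarith
    simp only [Pi.div_apply]
    rw [mul_div_mul_right _ _ hK0]
end
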